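/- Let u be a smooth, rapidly decaying real-valued solution of ∂_t u - (1/5)∂_x^5 u = β ∂_x(u^5) on a time interval. Then the energy E(t) = ∫_ℝ ( (1/2)(∂_x^2 u)² + (5/6) β u^6 ) dx is independent of t. -/

import Mathlib

/-- Partial derivative in time. -/
noncomputable def pt (u : ℝ → ℝ → ℝ) (t x : ℝ) : ℝ := deriv (fun s => u s x) t

/-- `k`-th partial derivative in space. -/
noncomputable def pxk (k : ℕ) (u : ℝ → ℝ → ℝ) (t x : ℝ) : ℝ :=
  iteratedDeriv k (fun y => u t y) x

/-!
Formally, the equation makes the time derivatives of the mass `∫ u²` and of the energy integrals of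
exact derivatives. The decay of `u t` is not assumed to be uniform in `t`, however, so one may not
differentiate under these integrals, and nothing says in advance that the `H²` norm of `u t` is
bounded in time.

On a time interval where the `H²` norm is bounded, truncate the integrals by dilated cutoffs. The
truncated fluxes are bounded in terms of the `H²` norm alone, hence dominated convergence yields the
mass law. For the energy, `∂²` is first replaced by a second difference quotient of step `h`; the
flux of this regularized energy is a commutator bounded in terms of the `H²` norm uniformly in `h`,
and it tends to zero with `h`.

By the Gagliardo–Nirenberg inequality, mass and energy control the `H²` norm, so on such intervals
it is bounded by a function of its value at any single time. To see that it is bounded throughout,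
let `F` be the closed set of times near which it is not. The norm is lower semicontinuous in time,
so if `F` were nonempty, Baire's theorem would bound the norm on a relatively open part of `F`. The
bound propagates from there into the neighbouring gaps of `F`, contradicting the definition of `F`.
-/

open MeasureTheory Filter Set Topology
open scoped ContDiff SchwartzMap

local notation:max "∂[" k "] " f:max => iteratedDeriv k f

/-! ### Schwartz functions -/

/-- The real functions on the line that underlie a Schwartz function, as a predicate on plain
functions so that `fun_prop` can propagate it. -/
@[fun_prop]
def IsSchwartz (f : ℝ → ℝ) : Prop :=
  ∃ φ : 𝓢(ℝ, ℝ), ⇑φ = f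

namespace IsSchwartz

variable {f g : ℝ → ℝ}

theorem of_decay (hf : ContDiff ℝ ∞ f)
    (hdecay : ∀ k n : ℕ, ∃ C, ∀ x, |x| ^ n * |∂[k] f x| ≤ C) : IsSchwartz f :=
  ⟨⟨f, hf, fun n k => by
    simpa only [norm_iteratedFDeriv_eq_norm_iteratedDeriv, Real.norm_eq_abs] using hdecay k n⟩, rfl⟩

theorem of_hasCompactSupport (hf : ContDiff ℝ ∞ f) (hsupp : HasCompactSupport f) : IsSchwartz f :=
  ⟨hsupp.toSchwartzMap hf, rfl⟩

@[fun_prop]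
protected theorem contDiff {n : ℕ} (hf : IsSchwartz f) : ContDiff ℝ n f := by
  obtain ⟨φ, rfl⟩ := hf
  exact φ.smooth n

@[fun_prop]
protected theorem contDiffAt {n : ℕ} {x : ℝ} (hf : IsSchwartz f) : ContDiffAt ℝ n f x :=
  hf.contDiff.contDiffAt

@[fun_prop]
protected theorem differentiable (hf : IsSchwartz f) : Differentiable ℝ f := by
  obtain ⟨φ, rfl⟩ := hf
  exact φ.differentiable

@[fun_prop]
protected theorem differentiableAt (hf : IsSchwartz f) {x : ℝ} : DifferentiableAt ℝ f x :=
  hf.differentiable x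

@[fun_prop]
protected theorem continuous (hf : IsSchwartz f) : Continuous f :=
  hf.differentiable.continuous

protected theorem integrable (hf : IsSchwartz f) : Integrable f := by
  obtain ⟨φ, rfl⟩ := hf
  exact φ.integrable

@[fun_prop]
protected theorem add (hf : IsSchwartz f) (hg : IsSchwartz g) :
    IsSchwartz fun x => f x + g x := by
  obtain ⟨φ, rfl⟩ := hf
  obtain ⟨ψ, rfl⟩ := hg
  exact ⟨φ + ψ, rfl⟩

@[fun_prop]
protected theorem sub (hf : IsSchwartz f) (hg : IsSchwartz g) :
    IsSchwartz fun x => f x - g x := by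
  obtain ⟨φ, rfl⟩ := hf
  obtain ⟨ψ, rfl⟩ := hg
  exact ⟨φ - ψ, rfl⟩

@[fun_prop]
protected theorem const_mul (c : ℝ) (hf : IsSchwartz f) : IsSchwartz fun x => c * f x := by
  obtain ⟨φ, rfl⟩ := hf
  exact ⟨c • φ, rfl⟩

@[fun_prop]
protected theorem div_const (hf : IsSchwartz f) (c : ℝ) : IsSchwartz fun x => f x / c := by
  simpa only [div_eq_inv_mul] using hf.const_mul c⁻¹

@[fun_prop]
protected theorem mul (hf : IsSchwartz f) (hg : IsSchwartz g) :
    IsSchwartz fun x => f x * g x := by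
  obtain ⟨φ, rfl⟩ := hf
  obtain ⟨ψ, rfl⟩ := hg
  exact ⟨SchwartzMap.pairing (ContinuousLinearMap.mul ℝ ℝ) φ ψ, rfl⟩

@[fun_prop]
protected theorem pow {n : ℕ} (hf : IsSchwartz f) (hn : n ≠ 0) :
    IsSchwartz fun x => f x ^ n := by
  induction n, Nat.one_le_iff_ne_zero.mpr hn using Nat.le_induction with
  | base => simpa only [pow_one] using hf
  | succ n hn ih => simpa only [pow_succ] using (ih (by omega)).mul hf

protected theorem comp_add_const (hf : IsSchwartz f) (c : ℝ) :
    IsSchwartz fun x => f (x + c) := by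
  obtain ⟨φ, rfl⟩ := hf
  exact ⟨φ.compSubConstCLM ℝ (-c), by ext x; simp⟩

@[fun_prop]
protected theorem deriv (hf : IsSchwartz f) : IsSchwartz (deriv f) := by
  obtain ⟨φ, rfl⟩ := hf
  exact ⟨SchwartzMap.derivCLM ℝ ℝ φ, rfl⟩

@[fun_prop]
protected theorem iteratedDeriv (k : ℕ) (hf : IsSchwartz f) : IsSchwartz (∂[k] f) := by
  induction k with
  | zero => simpa only [iteratedDeriv_zero] using hf
  | succ k ih => simpa only [iteratedDeriv_succ] using ih.deriv

theorem bounded (hf : IsSchwartz f) : ∃ C, ∀ x, |f x| ≤ C := by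
  obtain ⟨φ, rfl⟩ := hf
  obtain ⟨C, hC⟩ := φ.decay 0 0
  exact ⟨C, fun x => by simpa using hC.2 x⟩

theorem exists_quadratic_decay (hf : IsSchwartz f) : ∃ C, ∀ x, (1 + x ^ 2) * |f x| ≤ C := by
  obtain ⟨φ, rfl⟩ := hf
  obtain ⟨C₀, hC₀⟩ := φ.decay' 0 0
  obtain ⟨C₂, hC₂⟩ := φ.decay' 2 0
  refine ⟨C₀ + C₂, fun x => ?_⟩
  have h₀ := hC₀ x
  have h₂ := hC₂ x
  simp only [pow_zero, one_mul, norm_iteratedFDeriv_zero, Real.norm_eq_abs, sq_abs] at h₀ h₂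
  change |φ x| ≤ _ at h₀
  change x ^ 2 * |φ x| ≤ _ at h₂
  linarith

end IsSchwartz

theorem deriv_iteratedDeriv (k : ℕ) (f : ℝ → ℝ) : deriv (∂[k] f) = ∂[k + 1] f :=
  iteratedDeriv_succ.symm

theorem deriv_deriv (f : ℝ → ℝ) : deriv (deriv f) = ∂[2] f := by
  rw [← deriv_iteratedDeriv, iteratedDeriv_one]

theorem iteratedDeriv_iteratedDeriv (j k : ℕ) (f : ℝ → ℝ) : ∂[j] ∂[k] f = ∂[j + k] f := by
  simp only [iteratedDeriv_eq_iterate, Function.iterate_add_apply]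

/-! ### Interpolation inequalities -/

theorem sq_integral_mul_le {α : Type*} [MeasurableSpace α] {μ : Measure α} {f g : α → ℝ}
    (hf : MemLp f 2 μ) (hg : MemLp g 2 μ) :
    (∫ x, f x * g x ∂μ) ^ 2 ≤ (∫ x, f x ^ 2 ∂μ) * ∫ x, g x ^ 2 ∂μ := by
  have hfg : Integrable (fun x => f x * g x) μ := hf.integrable_mul hg
  have hlin (s : ℝ) : Integrable (fun x => s * s * f x ^ 2 + 2 * s * (f x * g x)) μ :=
    (hf.integrable_sq.const_mul _).add (hfg.const_mul _)
  have hquad (s : ℝ) : 0 ≤ (∫ x, f x ^ 2 ∂μ) * (s * s) + (2 * ∫ x, f x * g x ∂μ) * s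
      + ∫ x, g x ^ 2 ∂μ := by
    calc 0 ≤ ∫ x, (s * f x + g x) ^ 2 ∂μ := integral_nonneg fun x => sq_nonneg _
      _ = ∫ x, (s * s * f x ^ 2 + 2 * s * (f x * g x) + g x ^ 2) ∂μ := by
        congr 1 with x
        ring
      _ = _ := by
        rw [integral_add (hlin s) hg.integrable_sq,
          integral_add (hf.integrable_sq.const_mul _) (hfg.const_mul _), integral_const_mul,
          integral_const_mul]
        ring
  have := discrim_le_zero hquad
  rw [discrim] at this
  linarith

/-- The squared `L²` norm on the line. -/
noncomputable def sqNorm (f : ℝ → ℝ) : ℝ :=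
  ∫ x, f x ^ 2

/-- The squared `H²` norm on the line, the quantity that the conservation laws control. -/
noncomputable def sobolevSq (f : ℝ → ℝ) : ℝ :=
  sqNorm f + sqNorm (deriv f) + sqNorm ∂[2] f

/-- The energy `∫ ½(f'')² + (5/6)βf⁶`, the Hamiltonian of the equation. -/
noncomputable def energy (β : ℝ) (f : ℝ → ℝ) : ℝ :=
  ∫ x, ((1 / 2) * ∂[2] f x ^ 2 + (5 / 6) * β * f x ^ 6)

theorem sqNorm_nonneg (f : ℝ → ℝ) : 0 ≤ sqNorm f :=
  integral_nonneg fun _ => sq_nonneg _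

theorem abs_integral_mul_mul_le {w f g : ℝ → ℝ} {B : ℝ} (hw : ∀ x, |w x| ≤ B)
    (hf : Integrable fun x => f x ^ 2) (hg : Integrable fun x => g x ^ 2) :
    |∫ x, w x * (f x * g x)| ≤ B * ((sqNorm f + sqNorm g) / 2) := by
  have hB : 0 ≤ B := (abs_nonneg _).trans (hw 0)
  calc |∫ x, w x * (f x * g x)| ≤ ∫ x, B * ((f x ^ 2 + g x ^ 2) / 2) := by
        have hint : Integrable fun x => B * ((f x ^ 2 + g x ^ 2) / 2) :=
          ((hf.add hg).div_const 2).const_mul B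
        rw [← Real.norm_eq_abs]
        refine norm_integral_le_of_norm_le hint (Eventually.of_forall fun x => ?_)
        rw [Real.norm_eq_abs, abs_mul, abs_mul]
        gcongr
        · exact hw x
        · nlinarith [sq_nonneg (|f x| - |g x|), sq_abs (f x), sq_abs (g x)]
    _ = B * ((sqNorm f + sqNorm g) / 2) := by
        rw [integral_const_mul, integral_div, integral_add hf hg, sqNorm, sqNorm]

theorem sqNorm_le_sobolevSq (f : ℝ → ℝ) : sqNorm f ≤ sobolevSq f := by
  rw [sobolevSq]
  linarith [sqNorm_nonneg (deriv f), sqNorm_nonneg ∂[2] f]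

theorem sqNorm_deriv_le_sobolevSq (f : ℝ → ℝ) : sqNorm (deriv f) ≤ sobolevSq f := by
  rw [sobolevSq]
  linarith [sqNorm_nonneg f, sqNorm_nonneg ∂[2] f]

theorem sqNorm_iteratedDeriv_two_le_sobolevSq (f : ℝ → ℝ) : sqNorm ∂[2] f ≤ sobolevSq f := by
  rw [sobolevSq]
  linarith [sqNorm_nonneg f, sqNorm_nonneg (deriv f)]

namespace IsSchwartz

variable {f g : ℝ → ℝ}

theorem integral_mul_deriv (hf : IsSchwartz f) (hg : IsSchwartz g) :
    ∫ x, f x * deriv g x = -∫ x, deriv f x * g x := by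
  obtain ⟨φ, rfl⟩ := hf
  obtain ⟨ψ, rfl⟩ := hg
  exact SchwartzMap.integral_mul_deriv_eq_neg_deriv_mul φ ψ

theorem integral_deriv_eq_zero (hf : IsSchwartz f) : ∫ x, deriv f x = 0 :=
  integral_eq_zero_of_hasDerivAt_of_integrable (fun _ => hf.differentiableAt.hasDerivAt)
    hf.deriv.integrable hf.integrable

theorem integral_mul_iteratedDeriv (hf : IsSchwartz f) (hg : IsSchwartz g) (k : ℕ) :
    ∫ x, f x * ∂[k] g x = (-1) ^ k * ∫ x, ∂[k] f x * g x := by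
  induction k generalizing f with
  | zero => simp only [iteratedDeriv_zero, pow_zero, one_mul]
  | succ k ih =>
    rw [iteratedDeriv_succ, hf.integral_mul_deriv (hg.iteratedDeriv k), ih hf.deriv,
      ← iteratedDeriv_succ']
    ring

theorem integral_mul_iteratedDeriv_eq_zero (hf : IsSchwartz f) {k : ℕ} (hk : Odd k) :
    ∫ x, f x * ∂[k] f x = 0 := by
  have h := hf.integral_mul_iteratedDeriv hf k
  simp only [hk.neg_one_pow, mul_comm (∂[k] f _)] at h
  linarith

theorem integral_pow_mul_deriv_eq_zero (hf : IsSchwartz f) {n : ℕ} :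
    ∫ x, f x ^ n * deriv f x = 0 := by
  have h := (hf.pow n.succ_ne_zero).integral_deriv_eq_zero
  simp (disch := fun_prop) only [deriv_fun_pow, add_tsub_cancel_right,
    mul_assoc, Nat.succ_eq_add_one, integral_const_mul, mul_eq_zero] at h
  exact h.resolve_left (by positivity)

protected theorem memLp_two (hf : IsSchwartz f) : MemLp f 2 := by
  obtain ⟨φ, rfl⟩ := hf
  exact φ.memLp 2

theorem integrable_sq (hf : IsSchwartz f) : Integrable fun x => f x ^ 2 :=
  hf.memLp_two.integrable_sq

theorem sq_eq_integral_Iic (hf : IsSchwartz f) (x : ℝ) :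
    f x ^ 2 = 2 * ∫ y in Iic x, f y * deriv f y := by
  have hderiv (y : ℝ) : HasDerivAt (fun y => f y ^ 2) (2 * (f y * deriv f y)) y := by
    simpa [mul_assoc] using (hf.differentiableAt (x := y)).hasDerivAt.fun_pow 2
  have hint : IntegrableOn (fun y => 2 * (f y * deriv f y)) (Iic x) :=
    ((hf.mul hf.deriv).const_mul 2).integrable.integrableOn
  have hlim := tendsto_zero_of_hasDerivAt_of_integrableOn_Iic (a := x) (fun y _ => hderiv y) hint
    hf.integrable_sq.integrableOn
  rw [← integral_const_mul, integral_Iic_of_hasDerivAt_of_tendsto' (fun y _ => hderiv y) hint hlim,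
    sub_zero]

theorem pow_four_le (hf : IsSchwartz f) (x : ℝ) : f x ^ 4 ≤ 4 * sqNorm f * sqNorm (deriv f) := by
  have hset {g : ℝ → ℝ} (hg : IsSchwartz g) : ∫ y in Iic x, g y ^ 2 ≤ sqNorm g :=
    setIntegral_le_integral hg.integrable_sq (Eventually.of_forall fun _ => sq_nonneg _)
  calc f x ^ 4 = 4 * (∫ y in Iic x, f y * deriv f y) ^ 2 := by
        rw [show f x ^ 4 = (f x ^ 2) ^ 2 by ring, hf.sq_eq_integral_Iic x]
        ring
    _ ≤ 4 * ((∫ y in Iic x, f y ^ 2) * ∫ y in Iic x, deriv f y ^ 2) := by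
        gcongr
        exact sq_integral_mul_le (hf.memLp_two.restrict _) (hf.deriv.memLp_two.restrict _)
    _ ≤ 4 * (sqNorm f * sqNorm (deriv f)) := by
        gcongr
        · exact sqNorm_nonneg f
        · exact hset hf
        · exact hset hf.deriv
    _ = 4 * sqNorm f * sqNorm (deriv f) := by ring

theorem abs_le_sqrt_sqNorm_add (hf : IsSchwartz f) (x : ℝ) :
    |f x| ≤ √(sqNorm f + sqNorm (deriv f)) := by
  have hM := sqNorm_nonneg f
  have hA := sqNorm_nonneg (deriv f)
  refine Real.abs_le_sqrt (abs_le_of_sq_le_sq' ?_ (by positivity)).2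
  nlinarith [hf.pow_four_le x, sq_nonneg (sqNorm f - sqNorm (deriv f))]

theorem abs_le_sqrt_sobolevSq (hf : IsSchwartz f) (x : ℝ) : |f x| ≤ √(sobolevSq f) := by
  refine (hf.abs_le_sqrt_sqNorm_add x).trans (Real.sqrt_le_sqrt ?_)
  rw [sobolevSq]
  linarith [sqNorm_nonneg ∂[2] f]

theorem integrable_sobolev (hf : IsSchwartz f) :
    Integrable fun x => f x ^ 2 + deriv f x ^ 2 + ∂[2] f x ^ 2 :=
  (hf.integrable_sq.add hf.deriv.integrable_sq).add (hf.iteratedDeriv 2).integrable_sq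

theorem sobolevSq_eq_integral (hf : IsSchwartz f) :
    sobolevSq f = ∫ x, (f x ^ 2 + deriv f x ^ 2 + ∂[2] f x ^ 2) := by
  have hint : Integrable fun x => f x ^ 2 + deriv f x ^ 2 :=
    hf.integrable_sq.add hf.deriv.integrable_sq
  rw [integral_add hint (hf.iteratedDeriv 2).integrable_sq,
    integral_add hf.integrable_sq hf.deriv.integrable_sq, sobolevSq, sqNorm, sqNorm, sqNorm]

theorem abs_deriv_le_sqrt_sobolevSq (hf : IsSchwartz f) (x : ℝ) :
    |deriv f x| ≤ √(sobolevSq f) := by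
  refine (hf.deriv.abs_le_sqrt_sqNorm_add x).trans (Real.sqrt_le_sqrt ?_)
  rw [deriv_deriv, sobolevSq]
  linarith [sqNorm_nonneg f]

theorem sq_sqNorm_deriv_le (hf : IsSchwartz f) :
    sqNorm (deriv f) ^ 2 ≤ sqNorm f * sqNorm ∂[2] f := by
  have hparts : sqNorm (deriv f) = -∫ x, f x * ∂[2] f x := by
    have h := hf.integral_mul_deriv hf.deriv
    rw [deriv_deriv] at h
    simp only [h, neg_neg, sqNorm, sq]
  rw [hparts, neg_sq]
  exact sq_integral_mul_le hf.memLp_two (hf.iteratedDeriv 2).memLp_two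

theorem integral_pow_six_le (hf : IsSchwartz f) :
    ∫ x, f x ^ 6 ≤ 4 * sqNorm f ^ 2 * sqNorm (deriv f) := by
  calc ∫ x, f x ^ 6 ≤ ∫ x, 4 * sqNorm f * sqNorm (deriv f) * f x ^ 2 := by
        refine integral_mono (hf.pow (by norm_num)).integrable (hf.integrable_sq.const_mul _)
          fun x => ?_
        calc f x ^ 6 = f x ^ 4 * f x ^ 2 := by ring
          _ ≤ 4 * sqNorm f * sqNorm (deriv f) * f x ^ 2 := by
            gcongr
            exact hf.pow_four_le x
    _ = 4 * sqNorm f ^ 2 * sqNorm (deriv f) := by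
        rw [integral_const_mul, ← sqNorm]
        ring

theorem energy_eq (β : ℝ) (hf : IsSchwartz f) :
    energy β f = 1 / 2 * sqNorm ∂[2] f + 5 / 6 * β * ∫ x, f x ^ 6 := by
  rw [energy, integral_add ((hf.iteratedDeriv 2).integrable_sq.const_mul _)
    ((hf.pow (by norm_num)).integrable.const_mul _), integral_const_mul, integral_const_mul, sqNorm]

theorem abs_mul_integral_pow_six_le (β : ℝ) (hf : IsSchwartz f) :
    |β * ∫ x, f x ^ 6| ≤ |β| * (4 * sqNorm f ^ 2 * sqNorm (deriv f)) := by
  rw [abs_mul, abs_of_nonneg (integral_nonneg fun x => by positivity)]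
  gcongr
  exact hf.integral_pow_six_le

theorem energy_le (β : ℝ) (hf : IsSchwartz f) {K : ℝ} (hK : sobolevSq f ≤ K) :
    energy β f ≤ 1 / 2 * K + 10 / 3 * |β| * K ^ 3 := by
  have hsix := (le_abs_self _).trans (hf.abs_mul_integral_pow_six_le β)
  have hM := sqNorm_nonneg f
  have hA := sqNorm_nonneg (deriv f)
  have hD := sqNorm_nonneg ∂[2] f
  rw [sobolevSq] at hK
  have hcube : sqNorm f ^ 2 * sqNorm (deriv f) ≤ K ^ 2 * K := by
    gcongr <;> linarith
  have := mul_le_mul_of_nonneg_left hcube (abs_nonneg β)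
  rw [hf.energy_eq]
  linarith

/- The Gagliardo–Nirenberg inequality makes the sextic term subquadratic in `‖f''‖`, so Young's
inequality absorbs it whatever the sign of `β`. -/
theorem sobolevSq_le (β : ℝ) (hf : IsSchwartz f) :
    sobolevSq f ≤ 3 / 2 * (sqNorm f + 4 * energy β f
      + (20 / 3 * |β| * sqNorm f ^ 2) ^ 2 * sqNorm f) := by
  have hsix := (neg_le_abs _).trans (hf.abs_mul_integral_pow_six_le β)
  have hinterp := hf.sq_sqNorm_deriv_le
  rw [hf.energy_eq, sobolevSq]
  set M := sqNorm f
  set A := sqNorm (deriv f)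
  set D := sqNorm ∂[2] f
  set κ := 20 / 3 * |β| * M ^ 2
  have hM : 0 ≤ M := sqNorm_nonneg f
  have hD : 0 ≤ D := sqNorm_nonneg ∂[2] f
  have : 0 ≤ κ := by positivity
  have young : κ * A ≤ (κ ^ 2 * M + D) / 2 := by
    refine (abs_le_of_sq_le_sq' ?_ (by positivity)).2
    nlinarith [sq_nonneg (κ ^ 2 * M - D), mul_le_mul_of_nonneg_left hinterp (sq_nonneg κ)]
  have hA : A ≤ (M + D) / 2 := by
    refine (abs_le_of_sq_le_sq' ?_ (by positivity)).2
    nlinarith [sq_nonneg (M - D)]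
  simp only [κ] at young ⊢
  linarith

variable {X : ℝ → ℝ}

theorem integral_mul_iteratedDeriv_five {w p : ℝ → ℝ} (hf : IsSchwartz f) (hw : IsSchwartz w)
    (hp : IsSchwartz p) :
    ∫ x, w x * ∂[5] f x =
      -∫ x, (∂[3] w x - p x * ∂[3] f x - 1 / 2 * deriv p x * ∂[2] f x) * ∂[2] f x := by
  have hparts : ∫ x, w x * ∂[5] f x = -∫ x, ∂[3] w x * ∂[2] f x := by
    have h := hw.integral_mul_iteratedDeriv (hf.iteratedDeriv 2) 3
    rwa [iteratedDeriv_iteratedDeriv, show (-1 : ℝ) ^ 3 = -1 by norm_num, neg_one_mul] at h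
  have hexact : ∫ x, (p x * ∂[3] f x + 1 / 2 * deriv p x * ∂[2] f x) * ∂[2] f x =
      1 / 2 * ∫ x, deriv (fun y => p y * ∂[2] f y ^ 2) x := by
    rw [← integral_const_mul]
    congr 1 with x
    simp (disch := fun_prop) [deriv_iteratedDeriv]
    ring
  have hzero : ∫ x, deriv (fun y => p y * ∂[2] f y ^ 2) x = 0 :=
    IsSchwartz.integral_deriv_eq_zero (by fun_prop (disch := norm_num))
  rw [hparts, ← sub_zero (∫ x, ∂[3] w x * _), ← mul_zero (1 / 2), ← hzero, ← hexact,
    ← integral_sub ((hw.iteratedDeriv 3).mul (hf.iteratedDeriv 2)).integrable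
      (IsSchwartz.integrable (by fun_prop))]
  congr 2 with x
  ring

theorem abs_integral_mul_iteratedDeriv_five_le {w p a b c : ℝ → ℝ} {m : ℝ} (hf : IsSchwartz f)
    (hw : IsSchwartz w) (hp : IsSchwartz p)
    (hcomm : ∀ x, ∂[3] w x - p x * ∂[3] f x - 1 / 2 * deriv p x * ∂[2] f x =
      a x * f x + b x * deriv f x + c x * ∂[2] f x)
    (ha : ∀ x, |a x| ≤ m) (hb : ∀ x, |b x| ≤ m) (hc : ∀ x, |c x| ≤ m) :
    |∫ x, w x * ∂[5] f x| ≤ 2 * m * sobolevSq f := by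
  have hm : 0 ≤ m := (abs_nonneg _).trans (ha 0)
  rw [hf.integral_mul_iteratedDeriv_five hw hp, abs_neg, hf.sobolevSq_eq_integral,
    ← integral_const_mul, ← Real.norm_eq_abs]
  refine norm_integral_le_of_norm_le (hf.integrable_sobolev.const_mul _)
    (Eventually.of_forall fun x => ?_)
  rw [hcomm, Real.norm_eq_abs, abs_mul]
  calc |a x * f x + b x * deriv f x + c x * ∂[2] f x| * |∂[2] f x|
      ≤ (m * |f x| + m * |deriv f x| + m * |∂[2] f x|) * |∂[2] f x| := by
        gcongr
        refine (abs_add_three _ _ _).trans ?_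
        simp only [abs_mul]
        gcongr
        exacts [ha x, hb x, hc x]
    _ ≤ 2 * m * (f x ^ 2 + deriv f x ^ 2 + ∂[2] f x ^ 2) := by
        simp only [← sq_abs (f x), ← sq_abs (deriv f x), ← sq_abs (∂[2] f x)]
        generalize |f x| = p, |deriv f x| = q, |∂[2] f x| = r
        nlinarith [mul_nonneg hm (sq_nonneg (p - r)), mul_nonneg hm (sq_nonneg (q - r)),
          mul_nonneg hm (sq_nonneg p), mul_nonneg hm (sq_nonneg q)]

theorem abs_integral_mul_self_mul_iteratedDeriv_five_le {B : ℝ} (hf : IsSchwartz f)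
    (hX : IsSchwartz X) (hB : ∀ j ≤ 3, ∀ x, |∂[j] X x| ≤ B) :
    |∫ x, X x * (f x * ∂[5] f x)| ≤ 6 * B * sobolevSq f := by
  have hcomm (x : ℝ) : ∂[3] (fun y => X y * f y) x - X x * ∂[3] f x
      - 1 / 2 * deriv X x * ∂[2] f x =
      ∂[3] X x * f x + 3 * ∂[2] X x * deriv f x + 5 / 2 * ∂[1] X x * ∂[2] f x := by
    rw [iteratedDeriv_fun_mul (by fun_prop) (by fun_prop)]
    simp [Finset.sum_range_succ, Nat.choose]
    ring
  have hB₀ : 0 ≤ B := (abs_nonneg _).trans (hB 0 (by norm_num) 0)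
  simp only [← mul_assoc]
  refine (hf.abs_integral_mul_iteratedDeriv_five_le (m := 3 * B) (hX.mul hf) hX hcomm
    (fun x => ?_) (fun x => ?_) fun x => ?_).trans_eq (by ring)
  · linarith [hB 3 le_rfl x]
  · rw [abs_mul, abs_of_pos (by norm_num)]
    linarith [hB 2 (by norm_num) x]
  · rw [abs_mul, abs_of_pos (by norm_num)]
    linarith [hB 1 (by norm_num) x]

theorem deriv_pow_five (hf : IsSchwartz f) :
    deriv (fun x => f x ^ 5) = fun x => 5 * f x ^ 4 * deriv f x := by
  ext x
  simp (disch := fun_prop)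

theorem iteratedDeriv_two_pow_five (hf : IsSchwartz f) :
    ∂[2] (fun x => f x ^ 5) =
      fun x => 20 * f x ^ 3 * deriv f x ^ 2 + 5 * f x ^ 4 * ∂[2] f x := by
  ext x
  rw [← deriv_deriv, hf.deriv_pow_five]
  simp (disch := fun_prop) [deriv_deriv]
  ring

theorem iteratedDeriv_three_pow_five (hf : IsSchwartz f) :
    ∂[3] (fun x => f x ^ 5) = fun x => 60 * f x ^ 2 * deriv f x ^ 3
      + 60 * f x ^ 3 * deriv f x * ∂[2] f x + 5 * f x ^ 4 * ∂[3] f x := by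
  ext x
  rw [← deriv_iteratedDeriv, hf.iteratedDeriv_two_pow_five]
  simp (disch := fun_prop) [deriv_deriv, deriv_iteratedDeriv]
  ring

/- With `p = 5 X f⁴` the third derivative of `f` drops out of the bracket. -/
theorem iteratedDeriv_three_mul_pow_five_sub (hf : IsSchwartz f) (hX : IsSchwartz X) (x : ℝ) :
    ∂[3] (fun y => X y * f y ^ 5) x - 5 * X x * f x ^ 4 * ∂[3] f x
      - 1 / 2 * deriv (fun y => 5 * X y * f y ^ 4) x * ∂[2] f x =
      ∂[3] X x * f x ^ 4 * f x
      + (15 * ∂[2] X x * f x ^ 4 + 60 * ∂[1] X x * f x ^ 3 * deriv f x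
        + 60 * ∂[0] X x * f x ^ 2 * deriv f x ^ 2) * deriv f x
      + (25 / 2 * ∂[1] X x * f x ^ 4 + 50 * ∂[0] X x * f x ^ 3 * deriv f x) * ∂[2] f x := by
  rw [iteratedDeriv_fun_mul (by fun_prop) (by fun_prop)]
  simp (disch := fun_prop) [Finset.sum_range_succ, Nat.choose, hf.iteratedDeriv_two_pow_five,
    hf.iteratedDeriv_three_pow_five]
  ring

theorem abs_integral_mul_pow_five_mul_iteratedDeriv_five_le {B m : ℝ} (hf : IsSchwartz f)
    (hX : IsSchwartz X) (hB : ∀ j ≤ 3, ∀ x, |∂[j] X x| ≤ B) (hm₀ : ∀ x, |f x| ≤ m)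
    (hm₁ : ∀ x, |deriv f x| ≤ m) :
    |∫ x, X x * (f x ^ 5 * ∂[5] f x)| ≤ 270 * B * m ^ 4 * sobolevSq f := by
  have hB₀ : 0 ≤ B := (abs_nonneg _).trans (hB 0 (by norm_num) 0)
  have hm : 0 ≤ m := (abs_nonneg _).trans (hm₀ 0)
  have hBm : 0 ≤ B * m ^ 4 := by positivity
  have hmono {r : ℝ} (hr : 0 ≤ r) {j : ℕ} (hj : j ≤ 3) {i k : ℕ} (hik : i + k = 4) (x : ℝ) :
      |r * ∂[j] X x * f x ^ i * deriv f x ^ k| ≤ r * (B * m ^ 4) := by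
    simp only [abs_mul, abs_pow, abs_of_nonneg hr]
    calc _ ≤ r * B * m ^ i * m ^ k := by
          gcongr
          exacts [hB j hj x, hm₀ x, hm₁ x]
      _ = r * (B * m ^ 4) := by rw [← hik]; ring
  simp only [← mul_assoc]
  refine (hf.abs_integral_mul_iteratedDeriv_five_le (m := 135 * (B * m ^ 4))
    (hX.mul (hf.pow (by norm_num))) (by fun_prop (disch := norm_num))
    (hf.iteratedDeriv_three_mul_pow_five_sub hX)
    (fun x => ?_) (fun x => ?_) fun x => ?_).trans_eq (by ring)
  · have h := hmono zero_le_one le_rfl (add_zero 4) x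
    simp only [one_mul, pow_zero, mul_one] at h
    linarith
  · have h₁ := hmono (r := 15) (by norm_num) (show 2 ≤ 3 by norm_num) (add_zero 4) x
    have h₂ := hmono (r := 60) (by norm_num) (show 1 ≤ 3 by norm_num) (i := 3) (k := 1) rfl x
    have h₃ := hmono (r := 60) (by norm_num) (show 0 ≤ 3 by norm_num) (i := 2) (k := 2) rfl x
    rw [pow_zero, mul_one] at h₁
    rw [pow_one] at h₂
    linarith [abs_add_three (15 * ∂[2] X x * f x ^ 4) (60 * ∂[1] X x * f x ^ 3 * deriv f x)
      (60 * ∂[0] X x * f x ^ 2 * deriv f x ^ 2)]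
  · have h₁ := hmono (r := 25 / 2) (by norm_num) (show 1 ≤ 3 by norm_num) (add_zero 4) x
    have h₂ := hmono (r := 50) (by norm_num) (show 0 ≤ 3 by norm_num) (i := 3) (k := 1) rfl x
    rw [pow_zero, mul_one] at h₁
    rw [pow_one] at h₂
    linarith [abs_add_le (25 / 2 * ∂[1] X x * f x ^ 4) (50 * ∂[0] X x * f x ^ 3 * deriv f x)]

end IsSchwartz

/-! ### Truncated integrals -/

/-- A smooth bump function dilated by `n + 1`: it equals `1` on `[-n, n]`, vanishes outside
`[-2(n+1), 2(n+1)]`, and its derivatives are bounded uniformly in `n`. -/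
noncomputable def cutoff (n : ℕ) (x : ℝ) : ℝ :=
  (⟨1, 2, one_pos, one_lt_two⟩ : ContDiffBump (0 : ℝ)) ((n + 1 : ℝ)⁻¹ * x)

theorem cutoff_eq_one {n : ℕ} {x : ℝ} (hx : |x| ≤ n) : cutoff n x = 1 := by
  apply ContDiffBump.one_of_mem_closedBall
  rw [mem_closedBall_zero_iff, Real.norm_eq_abs, abs_mul, abs_of_pos (by positivity),
    inv_mul_le_iff₀ (by positivity)]
  linarith

theorem cutoff_eq_zero {n : ℕ} {x : ℝ} (hx : 2 * (n + 1 : ℝ) ≤ |x|) : cutoff n x = 0 := by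
  apply ContDiffBump.zero_of_le_dist
  rw [dist_zero_right, Real.norm_eq_abs, abs_mul, abs_of_pos (by positivity),
    le_inv_mul_iff₀ (by positivity)]
  linarith

theorem isSchwartz_cutoff (n : ℕ) : IsSchwartz (cutoff n) := by
  refine .of_hasCompactSupport ((ContDiffBump.contDiff _).comp (contDiff_const.mul contDiff_id)) ?_
  refine .of_support_subset_isCompact (isCompact_Icc (a := -(2 * (n + 1 : ℝ))) (b := 2 * (n + 1)))
    fun x hx => abs_le.1 (le_of_not_ge fun h => hx (cutoff_eq_zero h))

theorem exists_abs_iteratedDeriv_cutoff_le (k : ℕ) :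
    ∃ B, ∀ n, ∀ j ≤ k, ∀ x, |∂[j] (cutoff n) x| ≤ B := by
  let b : ContDiffBump (0 : ℝ) := ⟨1, 2, one_pos, one_lt_two⟩
  have hb : IsSchwartz b := .of_hasCompactSupport b.contDiff b.hasCompactSupport
  choose C hC using fun j => (hb.iteratedDeriv j).bounded
  refine ⟨∑ j ∈ Finset.range (k + 1), C j, fun n j hj x => ?_⟩
  have hinv : |((n + 1 : ℝ)⁻¹) ^ j| ≤ 1 := by
    rw [abs_of_nonneg (by positivity)]
    exact pow_le_one₀ (by positivity) (inv_le_one_of_one_le₀ (by linarith [n.cast_nonneg (α := ℝ)]))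
  calc |∂[j] (cutoff n) x| = |((n + 1 : ℝ)⁻¹) ^ j| * |∂[j] b ((n + 1 : ℝ)⁻¹ * x)| := by
        rw [← abs_mul]
        exact congrArg abs (congrFun (iteratedDeriv_comp_const_mul b.contDiff _) x)
    _ ≤ 1 * C j := mul_le_mul hinv (hC j _) (abs_nonneg _) zero_le_one
    _ ≤ ∑ j ∈ Finset.range (k + 1), C j := by
        rw [one_mul]
        exact Finset.single_le_sum (fun i _ => (abs_nonneg _).trans (hC i 0))
          (Finset.mem_range.2 (by omega))

theorem exists_abs_cutoff_le : ∃ B, ∀ n x, |cutoff n x| ≤ B := by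
  obtain ⟨B, hB⟩ := exists_abs_iteratedDeriv_cutoff_le 0
  exact ⟨B, fun n x => by simpa only [iteratedDeriv_zero] using hB n 0 le_rfl x⟩

theorem tendsto_integral_cutoff_mul {f : ℝ → ℝ} (hf : Integrable f) :
    Tendsto (fun n => ∫ x, cutoff n x * f x) atTop (𝓝 (∫ x, f x)) := by
  obtain ⟨B, hB⟩ := exists_abs_cutoff_le
  refine tendsto_integral_of_dominated_convergence (fun x => B * |f x|)
    (fun n => (isSchwartz_cutoff n).continuous.aestronglyMeasurable.mul hf.1)
    (hf.abs.const_mul B) (fun n => Eventually.of_forall fun x => ?_)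
    (Eventually.of_forall fun x => ?_)
  · rw [Real.norm_eq_abs, abs_mul]
    exact mul_le_mul_of_nonneg_right (hB n x) (abs_nonneg _)
  · obtain ⟨m, hm⟩ := exists_nat_ge |x|
    refine tendsto_const_nhds.congr' ?_
    filter_upwards [eventually_ge_atTop m] with n hn
    rw [cutoff_eq_one (hm.trans (Nat.cast_le.2 hn)), one_mul]

theorem integral_cutoff_mul (n : ℕ) (f : ℝ → ℝ) :
    ∫ x, cutoff n x * f x = ∫ x in -(2 * (n + 1 : ℝ))..2 * (n + 1), cutoff n x * f x := by
  symm
  apply intervalIntegral.integral_eq_integral_of_support_subset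
  intro x hx
  have hx' : |x| < 2 * (n + 1) := by
    by_contra! h
    exact hx (by simp only [cutoff_eq_zero h, zero_mul])
  exact ⟨(abs_lt.1 hx').1, (abs_lt.1 hx').2.le⟩

theorem continuous_uncurry_cutoff_mul (n : ℕ) {A : ℝ → ℝ → ℝ}
    (hA : Continuous (Function.uncurry A)) :
    Continuous (Function.uncurry fun t x => cutoff n x * A t x) :=
  ((isSchwartz_cutoff n).continuous.comp continuous_snd).mul hA

theorem integral_cutoff_mul_sub {F A : ℝ → ℝ → ℝ} {c d : ℝ} (n : ℕ)
    (hA : Continuous (Function.uncurry A)) (hFc : Continuous (F c)) (hFd : Continuous (F d))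
    (hF : ∀ t ∈ uIcc c d, ∀ x, HasDerivAt (fun s => F s x) (A t x) t) :
    (∫ x, cutoff n x * F d x) - ∫ x, cutoff n x * F c x =
      ∫ t in c..d, ∫ x, cutoff n x * A t x := by
  have hcont := (isSchwartz_cutoff n).continuous
  have hFTC (x : ℝ) : cutoff n x * F d x - cutoff n x * F c x =
      ∫ t in c..d, cutoff n x * A t x := by
    rw [intervalIntegral.integral_const_mul, ← mul_sub,
      intervalIntegral.integral_eq_sub_of_hasDerivAt fun t ht => hF t ht x]
    exact (hA.comp (Continuous.prodMk_left x)).intervalIntegrable _ _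
  have hint {g : ℝ → ℝ} (hg : Continuous g) (p q : ℝ) :
      IntervalIntegrable (fun x => cutoff n x * g x) volume p q :=
    (hcont.mul hg).intervalIntegrable _ _
  simp only [integral_cutoff_mul n]
  rw [← intervalIntegral.integral_sub (hint hFd _ _) (hint hFc _ _),
    intervalIntegral_intervalIntegral_swap]
  · simp only [hFTC]
  · refine IntegrableOn.mono_set (t := uIcc c d ×ˢ uIcc _ _) ?_
      (prod_mono uIoc_subset_uIcc uIoc_subset_uIcc)
    exact (continuous_uncurry_cutoff_mul n hA).continuousOn.integrableOn_compact
      (isCompact_uIcc.prod isCompact_uIcc)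

/-- A density `A t x` whose truncated integrals `∫ cutoff n * A t` are bounded uniformly in `n` and
in `t ∈ I`: what is needed to integrate `A` over space under the time integral, without assuming
that the decay of `A t` is uniform in `t`. -/
structure CutoffControlled (I : Set ℝ) (A : ℝ → ℝ → ℝ) : Prop where
  continuous : Continuous (Function.uncurry A)
  isSchwartz : ∀ t ∈ I, IsSchwartz (A t)
  bounded : ∃ M, ∀ n, ∀ t ∈ I, |∫ x, cutoff n x * A t x| ≤ M

namespace CutoffControlled

variable {I : Set ℝ} {A A' : ℝ → ℝ → ℝ}

protected theorem add (hA : CutoffControlled I A) (hA' : CutoffControlled I A') :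
    CutoffControlled I fun t x => A t x + A' t x := by
  obtain ⟨M, hM⟩ := hA.bounded
  obtain ⟨M', hM'⟩ := hA'.bounded
  refine ⟨hA.continuous.add hA'.continuous,
    fun t ht => (hA.isSchwartz t ht).add (hA'.isSchwartz t ht), M + M', fun n t ht => ?_⟩
  simp only [mul_add]
  rw [integral_add ((isSchwartz_cutoff n).mul (hA.isSchwartz t ht)).integrable
    ((isSchwartz_cutoff n).mul (hA'.isSchwartz t ht)).integrable]
  exact (abs_add_le _ _).trans (add_le_add (hM n t ht) (hM' n t ht))

protected theorem const_mul (c : ℝ) (hA : CutoffControlled I A) :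
    CutoffControlled I fun t x => c * A t x := by
  obtain ⟨M, hM⟩ := hA.bounded
  refine ⟨continuous_const.mul hA.continuous, fun t ht => (hA.isSchwartz t ht).const_mul c,
    |c| * M, fun n t ht => ?_⟩
  simp only [mul_left_comm _ c]
  rw [integral_const_mul, abs_mul]
  exact mul_le_mul_of_nonneg_left (hM n t ht) (abs_nonneg c)

theorem of_sqNorm_le {f g : ℝ → ℝ → ℝ} (hf : Continuous (Function.uncurry f))
    (hg : Continuous (Function.uncurry g)) (hfs : ∀ t ∈ I, IsSchwartz (f t))
    (hgs : ∀ t ∈ I, IsSchwartz (g t)) (hfM : ∃ M, ∀ t ∈ I, sqNorm (f t) ≤ M)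
    (hgM : ∃ M, ∀ t ∈ I, sqNorm (g t) ≤ M) : CutoffControlled I fun t x => f t x * g t x := by
  obtain ⟨B, hB⟩ := exists_abs_cutoff_le
  obtain ⟨M, hM⟩ := hfM
  obtain ⟨M', hM'⟩ := hgM
  have hB₀ : 0 ≤ B := (abs_nonneg _).trans (hB 0 0)
  refine ⟨hf.mul hg, fun t ht => (hfs t ht).mul (hgs t ht), B * ((M + M') / 2),
    fun n t ht => (abs_integral_mul_mul_le (hB n) (hfs t ht).integrable_sq
      (hgs t ht).integrable_sq).trans ?_⟩
  gcongr
  exacts [hM t ht, hM' t ht]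

theorem tendsto_integral {c d : ℝ} (hA : CutoffControlled (uIcc c d) A) :
    Tendsto (fun n => ∫ t in c..d, ∫ x, cutoff n x * A t x) atTop
      (𝓝 (∫ t in c..d, ∫ x, A t x)) := by
  obtain ⟨M, hM⟩ := hA.bounded
  refine intervalIntegral.tendsto_integral_filter_of_dominated_convergence (fun _ => M)
    (Eventually.of_forall fun n => ?_)
    (Eventually.of_forall fun n => Eventually.of_forall fun t ht => hM n t (uIoc_subset_uIcc ht))
    intervalIntegrable_const (Eventually.of_forall fun t ht =>
      tendsto_integral_cutoff_mul (hA.isSchwartz t (uIoc_subset_uIcc ht)).integrable)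
  simp only [integral_cutoff_mul n]
  exact (intervalIntegral.continuous_parametric_intervalIntegral_of_continuous'
    (continuous_uncurry_cutoff_mul n hA.continuous) _ _).aestronglyMeasurable

theorem integral_sub_integral {F : ℝ → ℝ → ℝ} {c d : ℝ} (hA : CutoffControlled (uIcc c d) A)
    (hFs : ∀ t ∈ uIcc c d, IsSchwartz (F t))
    (hF : ∀ t ∈ uIcc c d, ∀ x, HasDerivAt (fun s => F s x) (A t x) t) :
    (∫ x, F d x) - ∫ x, F c x = ∫ t in c..d, ∫ x, A t x := by
  have hc := hFs c left_mem_uIcc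
  have hd := hFs d right_mem_uIcc
  refine tendsto_nhds_unique ?_ hA.tendsto_integral
  simp only [← integral_cutoff_mul_sub _ hA.continuous hc.continuous hd.continuous hF]
  exact (tendsto_integral_cutoff_mul hd.integrable).sub (tendsto_integral_cutoff_mul hc.integrable)

theorem of_mul_iteratedDeriv_five {v : ℝ → ℝ → ℝ} (hv : Continuous (Function.uncurry v))
    (hv₅ : Continuous (Function.uncurry fun t x => ∂[5] (v t) x))
    (hvs : ∀ t ∈ I, IsSchwartz (v t)) (hM : ∃ M, ∀ t ∈ I, sobolevSq (v t) ≤ M) :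
    CutoffControlled I fun t x => v t x * ∂[5] (v t) x := by
  obtain ⟨B, hB⟩ := exists_abs_iteratedDeriv_cutoff_le 3
  obtain ⟨M, hM⟩ := hM
  have hB₀ : 0 ≤ B := (abs_nonneg _).trans (hB 0 0 (by norm_num) 0)
  refine ⟨hv.mul hv₅, fun t ht => (hvs t ht).mul ((hvs t ht).iteratedDeriv 5), 6 * B * M,
    fun n t ht => ((hvs t ht).abs_integral_mul_self_mul_iteratedDeriv_five_le
      (isSchwartz_cutoff n) (hB n)).trans ?_⟩
  gcongr
  exact hM t ht

theorem of_pow_five_mul_iteratedDeriv_five {v : ℝ → ℝ → ℝ} (hv : Continuous (Function.uncurry v))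
    (hv₅ : Continuous (Function.uncurry fun t x => ∂[5] (v t) x))
    (hvs : ∀ t ∈ I, IsSchwartz (v t)) (hM : ∃ M, ∀ t ∈ I, sobolevSq (v t) ≤ M) :
    CutoffControlled I fun t x => v t x ^ 5 * ∂[5] (v t) x := by
  obtain ⟨B, hB⟩ := exists_abs_iteratedDeriv_cutoff_le 3
  obtain ⟨M, hM⟩ := hM
  have hB₀ : 0 ≤ B := (abs_nonneg _).trans (hB 0 0 (by norm_num) 0)
  refine ⟨(hv.pow 5).mul hv₅,
    fun t ht => ((hvs t ht).pow (by norm_num)).mul ((hvs t ht).iteratedDeriv 5),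
    270 * B * √M ^ 4 * M, fun n t ht => ?_⟩
  have hsqrt : √(sobolevSq (v t)) ≤ √M := Real.sqrt_le_sqrt (hM t ht)
  refine ((hvs t ht).abs_integral_mul_pow_five_mul_iteratedDeriv_five_le (isSchwartz_cutoff n)
    (hB n) (fun x => ((hvs t ht).abs_le_sqrt_sobolevSq x).trans hsqrt)
    fun x => ((hvs t ht).abs_deriv_le_sqrt_sobolevSq x).trans hsqrt).trans ?_
  gcongr
  exact hM t ht

end CutoffControlled

/-! ### Difference quotients -/

/-- The forward difference quotient of `f` with step `h`. -/
noncomputable def diffQuot (h : ℝ) (f : ℝ → ℝ) (x : ℝ) : ℝ :=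
  (f (x + h) - f x) / h

/-- The second forward difference quotient, a bounded operator on `L²` that approximates `∂²`. -/
noncomputable def secondDiffQuot (h : ℝ) (f : ℝ → ℝ) : ℝ → ℝ :=
  diffQuot h (diffQuot h f)

theorem secondDiffQuot_mul (h : ℝ) (f g : ℝ → ℝ) (x : ℝ) :
    secondDiffQuot h (fun y => f y * g y) x = f x * secondDiffQuot h g x +
      2 * (diffQuot h f x * diffQuot h g (x + h)) +
      secondDiffQuot h f x * g (x + 2 * h) := by
  simp only [secondDiffQuot, diffQuot, two_mul, ← add_assoc]
  ring

theorem abs_diffQuot_le {f : ℝ → ℝ} (hf : Differentiable ℝ f) {B : ℝ}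
    (hB : ∀ x, |deriv f x| ≤ B) (h x : ℝ) : |diffQuot h f x| ≤ B := by
  have hmv := convex_univ.norm_image_sub_le_of_norm_deriv_le (fun y _ => hf y)
    (fun y _ => hB y) (mem_univ x) (mem_univ (x + h))
  rw [add_sub_cancel_left, Real.norm_eq_abs, Real.norm_eq_abs] at hmv
  rw [diffQuot, abs_div]
  exact div_le_of_le_mul₀ (abs_nonneg h) ((abs_nonneg _).trans (hB 0)) hmv

theorem exists_diffQuot_eq {f : ℝ → ℝ} (hf : Differentiable ℝ f) {h : ℝ} (hh : 0 < h) (x : ℝ) :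
    ∃ ξ ∈ Ioo x (x + h), diffQuot h f x = deriv f ξ := by
  obtain ⟨ξ, hξ, hslope⟩ := exists_deriv_eq_slope f (lt_add_of_pos_right x hh)
    hf.continuous.continuousOn hf.differentiableOn
  exact ⟨ξ, hξ, by rw [hslope, diffQuot, add_sub_cancel_left]⟩

namespace IsSchwartz

variable {f g : ℝ → ℝ}

@[fun_prop]
protected theorem diffQuot (h : ℝ) (hf : IsSchwartz f) : IsSchwartz (diffQuot h f) :=
  ((hf.comp_add_const h).sub hf).div_const h

@[fun_prop]
protected theorem secondDiffQuot (h : ℝ) (hf : IsSchwartz f) : IsSchwartz (secondDiffQuot h f) :=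
  (hf.diffQuot h).diffQuot h

theorem deriv_diffQuot (hf : IsSchwartz f) (h : ℝ) :
    deriv (diffQuot h f) = diffQuot h (deriv f) := by
  ext x
  exact ((((hf.differentiableAt (x := x + h)).hasDerivAt.comp_add_const x h).sub
    hf.differentiableAt.hasDerivAt).div_const h).deriv

theorem deriv_secondDiffQuot (hf : IsSchwartz f) (h : ℝ) :
    deriv (secondDiffQuot h f) = secondDiffQuot h (deriv f) := by
  rw [secondDiffQuot, (hf.diffQuot h).deriv_diffQuot, hf.deriv_diffQuot, secondDiffQuot]

theorem iteratedDeriv_secondDiffQuot (hf : IsSchwartz f) (h : ℝ) (k : ℕ) :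
    ∂[k] (secondDiffQuot h f) = secondDiffQuot h ∂[k] f := by
  induction k with
  | zero => simp only [iteratedDeriv_zero]
  | succ k ih =>
    rw [← deriv_iteratedDeriv, ih, (hf.iteratedDeriv k).deriv_secondDiffQuot, deriv_iteratedDeriv]

theorem diffQuot_eq_integral (hf : IsSchwartz f) {h : ℝ} (hh : h ≠ 0) (x : ℝ) :
    diffQuot h f x = ∫ s in Ioc 0 1, deriv f (x + h * s) := by
  rw [← intervalIntegral.integral_of_le zero_le_one, intervalIntegral.integral_comp_add_mul _ hh,
    intervalIntegral.integral_deriv_eq_sub (fun y _ => hf.differentiableAt)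
      (hf.deriv.continuous.intervalIntegrable _ _), diffQuot, smul_eq_mul, mul_zero, mul_one,
    add_zero, div_eq_inv_mul]

theorem sq_diffQuot_le (hf : IsSchwartz f) {h : ℝ} (hh : h ≠ 0) (x : ℝ) :
    diffQuot h f x ^ 2 ≤ ∫ s in Ioc 0 1, deriv f (x + h * s) ^ 2 := by
  obtain ⟨C, hC⟩ := hf.deriv.bounded
  have hcont : Continuous fun s => deriv f (x + h * s) := by fun_prop
  have hmem : MemLp (fun s => deriv f (x + h * s)) 2 (volume.restrict (Ioc (0 : ℝ) 1)) :=
    .of_bound hcont.aestronglyMeasurable C (Eventually.of_forall fun s => hC _)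
  simpa [hf.diffQuot_eq_integral hh] using sq_integral_mul_le (memLp_const 1) hmem

theorem sqNorm_diffQuot_le (hf : IsSchwartz f) {h : ℝ} (hh : h ≠ 0) :
    sqNorm (diffQuot h f) ≤ sqNorm (deriv f) := by
  have htrans (s : ℝ) : ∫ x, deriv f (x + h * s) ^ 2 = sqNorm (deriv f) :=
    integral_add_right_eq_self (fun x => deriv f x ^ 2) (h * s)
  have hcont : Continuous fun p : ℝ × ℝ => deriv f (p.1 + h * p.2) ^ 2 := by fun_prop
  have hint : Integrable (fun p : ℝ × ℝ => deriv f (p.1 + h * p.2) ^ 2)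
      (volume.prod (volume.restrict (Ioc (0 : ℝ) 1))) := by
    rw [integrable_prod_iff' hcont.aestronglyMeasurable]
    refine ⟨Eventually.of_forall fun s => hf.deriv.integrable_sq.comp_add_right (h * s), ?_⟩
    simpa only [norm_pow, Real.norm_eq_abs, sq_abs, htrans] using integrable_const _
  calc sqNorm (diffQuot h f) ≤ ∫ x, ∫ s in Ioc 0 1, deriv f (x + h * s) ^ 2 :=
        integral_mono (hf.diffQuot h).integrable_sq hint.integral_prod_left (hf.sq_diffQuot_le hh)
    _ = ∫ s in Ioc (0 : ℝ) 1, ∫ x, deriv f (x + h * s) ^ 2 := integral_integral_swap hint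
    _ = sqNorm (deriv f) := by simp [htrans]

theorem sqNorm_secondDiffQuot_le (hf : IsSchwartz f) {h : ℝ} (hh : h ≠ 0) :
    sqNorm (secondDiffQuot h f) ≤ sqNorm ∂[2] f :=
  calc sqNorm (secondDiffQuot h f) ≤ sqNorm (diffQuot h (deriv f)) := by
        rw [← hf.deriv_diffQuot]
        exact (hf.diffQuot h).sqNorm_diffQuot_le hh
    _ ≤ sqNorm ∂[2] f := by
        rw [← deriv_deriv]
        exact hf.deriv.sqNorm_diffQuot_le hh

theorem sqNorm_diffQuot_le_mul (hf : IsSchwartz f) (h : ℝ) :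
    sqNorm (diffQuot h f) ≤ 4 / h ^ 2 * sqNorm f := by
  have hshift : Integrable fun x => f (x + h) ^ 2 := hf.integrable_sq.comp_add_right h
  have htrans : ∫ x, f (x + h) ^ 2 = sqNorm f :=
    integral_add_right_eq_self (fun x => f x ^ 2) h
  calc sqNorm (diffQuot h f) ≤ ∫ x, 2 / h ^ 2 * (f (x + h) ^ 2 + f x ^ 2) := by
        refine integral_mono (hf.diffQuot h).integrable_sq
          ((hshift.add hf.integrable_sq).const_mul _) fun x => ?_
        dsimp only [diffQuot]
        rw [div_pow, div_mul_eq_mul_div]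
        gcongr
        linarith [sq_nonneg (f (x + h) + f x)]
    _ = 4 / h ^ 2 * sqNorm f := by
        rw [integral_const_mul, integral_add hshift hf.integrable_sq, htrans, sqNorm]
        ring

theorem sqNorm_secondDiffQuot_le_mul (hf : IsSchwartz f) (h : ℝ) :
    sqNorm (secondDiffQuot h f) ≤ (4 / h ^ 2) ^ 2 * sqNorm f :=
  calc sqNorm (secondDiffQuot h f) ≤ 4 / h ^ 2 * sqNorm (diffQuot h f) :=
        (hf.diffQuot h).sqNorm_diffQuot_le_mul h
    _ ≤ 4 / h ^ 2 * (4 / h ^ 2 * sqNorm f) := by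
        gcongr
        exact hf.sqNorm_diffQuot_le_mul h
    _ = (4 / h ^ 2) ^ 2 * sqNorm f := by ring

theorem sobolevSq_secondDiffQuot_le (hf : IsSchwartz f) (h : ℝ) :
    sobolevSq (secondDiffQuot h f) ≤ (4 / h ^ 2) ^ 2 * sobolevSq f := by
  rw [sobolevSq, hf.deriv_secondDiffQuot, hf.iteratedDeriv_secondDiffQuot, sobolevSq]
  linarith [hf.sqNorm_secondDiffQuot_le_mul h, hf.deriv.sqNorm_secondDiffQuot_le_mul h,
    (hf.iteratedDeriv 2).sqNorm_secondDiffQuot_le_mul h]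

theorem exists_secondDiffQuot_eq (hf : IsSchwartz f) {h : ℝ} (hh : 0 < h) (x : ℝ) :
    ∃ ξ ∈ Ioo x (x + 2 * h), secondDiffQuot h f x = ∂[2] f ξ := by
  obtain ⟨ξ, hξ, hfξ⟩ := exists_diffQuot_eq (hf.diffQuot h).differentiable hh x
  obtain ⟨η, hη, hfη⟩ := exists_diffQuot_eq hf.deriv.differentiable hh ξ
  refine ⟨η, ⟨hξ.1.trans hη.1, by linarith [hξ.2, hη.2]⟩, ?_⟩
  rw [secondDiffQuot, hfξ, hf.deriv_diffQuot, hfη, deriv_deriv]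

theorem tendsto_secondDiffQuot (hf : IsSchwartz f) (x : ℝ) :
    Tendsto (fun h => secondDiffQuot h f x) (𝓝[>] 0) (𝓝 (∂[2] f x)) := by
  choose! ξ hξ hfξ using fun (h : ℝ) (hh : 0 < h) => hf.exists_secondDiffQuot_eq hh x
  have hpos : ∀ᶠ h : ℝ in 𝓝[>] 0, 0 < h := self_mem_nhdsWithin
  have hright : Tendsto (fun h => x + 2 * h) (𝓝[>] 0) (𝓝 x) :=
    tendsto_nhdsWithin_of_tendsto_nhds (Continuous.tendsto' (by fun_prop) _ _ (by ring))
  have hξx : Tendsto ξ (𝓝[>] 0) (𝓝 x) :=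
    tendsto_of_tendsto_of_tendsto_of_le_of_le' tendsto_const_nhds hright
      (hpos.mono fun h hh => (hξ h hh).1.le) (hpos.mono fun h hh => (hξ h hh).2.le)
  exact (((hf.iteratedDeriv 2).continuous.tendsto x).comp hξx).congr'
    (hpos.mono fun h hh => (hfξ h hh).symm)

theorem exists_abs_secondDiffQuot_le (hf : IsSchwartz f) :
    ∃ C, ∀ h ∈ Ioc (0 : ℝ) 1, ∀ x, |secondDiffQuot h f x| ≤ C * (1 + x ^ 2)⁻¹ := by
  obtain ⟨C, hC⟩ := (hf.iteratedDeriv 2).exists_quadratic_decay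
  refine ⟨10 * C, fun h hh x => ?_⟩
  obtain ⟨ξ, hξ, hfξ⟩ := hf.exists_secondDiffQuot_eq hh.1 x
  have hclose : 1 + x ^ 2 ≤ 10 * (1 + ξ ^ 2) := by
    have hdist : (ξ - x) ^ 2 ≤ 4 := by nlinarith [hξ.1, hξ.2, hh.2]
    nlinarith [sq_nonneg (2 * ξ - x)]
  rw [hfξ, ← div_eq_mul_inv, le_div_iff₀ (by positivity)]
  nlinarith [hC ξ, abs_nonneg (∂[2] f ξ)]

theorem tendsto_integral_secondDiffQuot_mul (hf : IsSchwartz f) (hg : IsSchwartz g) :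
    Tendsto (fun h => ∫ x, secondDiffQuot h f x * secondDiffQuot h g x) (𝓝[>] 0)
      (𝓝 (∫ x, ∂[2] f x * ∂[2] g x)) := by
  obtain ⟨C, hC⟩ := hf.exists_abs_secondDiffQuot_le
  obtain ⟨C', hC'⟩ := hg.exists_abs_secondDiffQuot_le
  have hone (x : ℝ) : (1 + x ^ 2)⁻¹ ≤ 1 := inv_le_one_of_one_le₀ (by linarith [sq_nonneg x])
  refine tendsto_integral_filter_of_dominated_convergence (fun x => C * (1 + x ^ 2)⁻¹ * C')
    (Eventually.of_forall fun h =>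
      ((hf.secondDiffQuot h).mul (hg.secondDiffQuot h)).continuous.aestronglyMeasurable) ?_
    ((integrable_inv_one_add_sq.const_mul C).mul_const C')
    (Eventually.of_forall fun x => (hf.tendsto_secondDiffQuot x).mul (hg.tendsto_secondDiffQuot x))
  filter_upwards [Ioc_mem_nhdsGT one_pos] with h hh
  refine Eventually.of_forall fun x => ?_
  have hC'₀ : 0 ≤ C' := by simpa using (abs_nonneg _).trans (hC' h hh 0)
  rw [Real.norm_eq_abs, abs_mul]
  gcongr
  exacts [(abs_nonneg _).trans (hC h hh x), hC h hh x,
    (hC' h hh x).trans (mul_le_of_le_one_right hC'₀ (hone x))]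

end IsSchwartz

/-! ### The regularized energy -/

/-- The energy `∫ ½f''² + (5/6)βf⁶` with `∂²` replaced by the second difference quotient. Its time
derivative along a solution involves no spatial derivative beyond those that `sobolevSq`
controls. -/
noncomputable def regularizedEnergy (h β : ℝ) (f : ℝ → ℝ) : ℝ :=
  ∫ x, ((1 / 2) * secondDiffQuot h f x ^ 2 + (5 / 6) * β * f x ^ 6)

/-- The rate of change of `regularizedEnergy h β` along a solution, divided by `β`. -/
noncomputable def energyFlux (h : ℝ) (f : ℝ → ℝ) : ℝ :=
  ∫ x, (secondDiffQuot h f x * secondDiffQuot h (deriv fun y => f y ^ 5) x + f x ^ 5 * ∂[5] f x)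

namespace IsSchwartz

variable {f : ℝ → ℝ}

theorem tendsto_regularizedEnergy (β : ℝ) (hf : IsSchwartz f) :
    Tendsto (fun h => regularizedEnergy h β f) (𝓝[>] 0) (𝓝 (energy β f)) := by
  have hpot : Integrable fun x => 5 / 6 * β * f x ^ 6 :=
    IsSchwartz.integrable (by fun_prop (disch := norm_num))
  have hkin {g : ℝ → ℝ} (hg : IsSchwartz g) : ∫ x, (1 / 2 * g x ^ 2 + 5 / 6 * β * f x ^ 6) =
      1 / 2 * (∫ x, g x * g x) + ∫ x, 5 / 6 * β * f x ^ 6 := by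
    rw [integral_add (hg.integrable_sq.const_mul _) hpot, integral_const_mul]
    simp only [sq]
  simp only [regularizedEnergy, energy, hkin (hf.secondDiffQuot _), hkin (hf.iteratedDeriv 2)]
  exact ((hf.tendsto_integral_secondDiffQuot_mul hf).const_mul _).add_const _

theorem integral_mul_self_mul_deriv {w : ℝ → ℝ} (hf : IsSchwartz f) (hw : IsSchwartz w) :
    ∫ x, w x * (f x * deriv f x) = -(1 / 2) * ∫ x, deriv w x * (f x * f x) := by
  have h := (hw.mul (hf.mul hf)).integral_deriv_eq_zero
  have hderiv : deriv (fun x => w x * (f x * f x)) =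
      fun x => deriv w x * (f x * f x) + 2 * (w x * (f x * deriv f x)) := by
    ext x
    simp (disch := fun_prop)
    ring
  rw [hderiv, integral_add (hw.deriv.mul (hf.mul hf)).integrable
    ((hw.mul (hf.mul hf.deriv)).const_mul 2).integrable, integral_const_mul] at h
  linarith

theorem integral_secondDiffQuot_mul_deriv {a : ℝ → ℝ} (hf : IsSchwartz f) (ha : IsSchwartz a)
    (h : ℝ) :
    ∫ x, secondDiffQuot h f x * secondDiffQuot h (fun y => a y * deriv f y) x =
      -(1 / 2) * (∫ x, deriv a x * (secondDiffQuot h f x * secondDiffQuot h f x)) +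
      2 * (∫ x, diffQuot h a x * (secondDiffQuot h f x * diffQuot h (deriv f) (x + h))) +
      ∫ x, deriv f (x + 2 * h) * (secondDiffQuot h f x * secondDiffQuot h a x) := by
  have hv := hf.secondDiffQuot h
  have h₀ : Integrable fun x => a x * (secondDiffQuot h f x * deriv (secondDiffQuot h f) x) :=
    (ha.mul (hv.mul hv.deriv)).integrable
  have h₁ : Integrable fun x =>
      2 * (diffQuot h a x * (secondDiffQuot h f x * diffQuot h (deriv f) (x + h))) :=
    (((ha.diffQuot h).mul
      (hv.mul ((hf.deriv.diffQuot h).comp_add_const h))).const_mul 2).integrable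
  have h₀₁ : Integrable fun x => a x * (secondDiffQuot h f x * deriv (secondDiffQuot h f) x) +
      2 * (diffQuot h a x * (secondDiffQuot h f x * diffQuot h (deriv f) (x + h))) := h₀.add h₁
  have h₂ : Integrable fun x =>
      deriv f (x + 2 * h) * (secondDiffQuot h f x * secondDiffQuot h a x) :=
    ((hf.deriv.comp_add_const (2 * h)).mul (hv.mul (ha.secondDiffQuot h))).integrable
  rw [← hv.integral_mul_self_mul_deriv ha, ← integral_const_mul, ← integral_add h₀ h₁,
    ← integral_add h₀₁ h₂, hf.deriv_secondDiffQuot]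
  congr 1 with x
  rw [secondDiffQuot_mul]
  ring

/- Uniform in `h`: each factor in `integral_secondDiffQuot_mul_deriv` carries at most two
differences or derivatives. -/
theorem abs_integral_secondDiffQuot_mul_deriv_le {a : ℝ → ℝ} {A m h : ℝ} (hf : IsSchwartz f)
    (ha : IsSchwartz a) (hA : ∀ x, |deriv a x| ≤ A) (hm : ∀ x, |deriv f x| ≤ m) (hh : h ≠ 0) :
    |∫ x, secondDiffQuot h f x * secondDiffQuot h (fun y => a y * deriv f y) x| ≤
      5 / 2 * A * sqNorm ∂[2] f + m * ((sqNorm ∂[2] f + sqNorm ∂[2] a) / 2) := by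
  have hv := hf.secondDiffQuot h
  have hshift := (hf.deriv.diffQuot h).comp_add_const h
  have hA₀ : 0 ≤ A := (abs_nonneg _).trans (hA 0)
  have hm₀ : 0 ≤ m := (abs_nonneg _).trans (hm 0)
  have hv_le := hf.sqNorm_secondDiffQuot_le hh
  have hshift_le : sqNorm (fun x => diffQuot h (deriv f) (x + h)) ≤ sqNorm ∂[2] f :=
    calc sqNorm (fun x => diffQuot h (deriv f) (x + h)) = sqNorm (diffQuot h (deriv f)) :=
          integral_add_right_eq_self (fun x => diffQuot h (deriv f) x ^ 2) h
      _ ≤ sqNorm ∂[2] f := deriv_deriv f ▸ hf.deriv.sqNorm_diffQuot_le hh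
  have hmain : |∫ x, deriv a x * (secondDiffQuot h f x * secondDiffQuot h f x)| ≤
      A * ((sqNorm ∂[2] f + sqNorm ∂[2] f) / 2) :=
    (abs_integral_mul_mul_le hA hv.integrable_sq hv.integrable_sq).trans (by gcongr)
  have hmixed : |∫ x, diffQuot h a x * (secondDiffQuot h f x * diffQuot h (deriv f) (x + h))| ≤
      A * ((sqNorm ∂[2] f + sqNorm ∂[2] f) / 2) :=
    (abs_integral_mul_mul_le (abs_diffQuot_le ha.differentiable hA h) hv.integrable_sq
      hshift.integrable_sq).trans (by gcongr)
  have hlast : |∫ x, deriv f (x + 2 * h) * (secondDiffQuot h f x * secondDiffQuot h a x)| ≤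
      m * ((sqNorm ∂[2] f + sqNorm ∂[2] a) / 2) :=
    (abs_integral_mul_mul_le (fun x => hm (x + 2 * h)) hv.integrable_sq
      (ha.secondDiffQuot h).integrable_sq).trans
      (by gcongr; exact ha.sqNorm_secondDiffQuot_le hh)
  rw [hf.integral_secondDiffQuot_mul_deriv ha]
  rw [abs_le] at hmain hmixed hlast ⊢
  constructor <;> linarith [hmain.1, hmain.2, hmixed.1, hmixed.2, hlast.1, hlast.2]

theorem sqNorm_mul_le {a : ℝ → ℝ} {B : ℝ} (hf : IsSchwartz f) (ha : IsSchwartz a)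
    (hB : ∀ x, |a x| ≤ B) : sqNorm (fun x => a x * f x) ≤ B ^ 2 * sqNorm f := by
  rw [sqNorm, sqNorm, ← integral_const_mul]
  refine integral_mono (ha.mul hf).integrable_sq (hf.integrable_sq.const_mul _) fun x => ?_
  rw [mul_pow]
  exact mul_le_mul_of_nonneg_right (sq_le_sq' (abs_le.1 (hB x)).1 (abs_le.1 (hB x)).2) (sq_nonneg _)

theorem sqNorm_add_le {g : ℝ → ℝ} (hf : IsSchwartz f) (hg : IsSchwartz g) :
    sqNorm (fun x => f x + g x) ≤ 2 * (sqNorm f + sqNorm g) := by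
  rw [sqNorm, sqNorm, sqNorm, ← integral_add hf.integrable_sq hg.integrable_sq,
    ← integral_const_mul]
  exact integral_mono (hf.add hg).integrable_sq
    ((hf.integrable_sq.add hg.integrable_sq).const_mul 2) fun x => add_sq_le

section Quintic

variable {m : ℝ}

theorem sqNorm_pow_five_le (hf : IsSchwartz f) (hm₀ : ∀ x, |f x| ≤ m) :
    sqNorm (fun x => f x ^ 5) ≤ (m ^ 4) ^ 2 * sqNorm f := by
  simp only [pow_succ _ 4]
  refine hf.sqNorm_mul_le (hf.pow four_ne_zero) fun x => ?_
  rw [abs_pow]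
  exact pow_le_pow_left₀ (abs_nonneg _) (hm₀ x) 4

theorem sqNorm_deriv_pow_five_le (hf : IsSchwartz f) (hm₀ : ∀ x, |f x| ≤ m) :
    sqNorm (deriv fun x => f x ^ 5) ≤ (5 * m ^ 4) ^ 2 * sqNorm (deriv f) := by
  rw [hf.deriv_pow_five]
  refine hf.deriv.sqNorm_mul_le (a := fun x => 5 * f x ^ 4) (by fun_prop (disch := norm_num))
    fun x => ?_
  rw [abs_mul, abs_pow, abs_of_pos (by norm_num : (0 : ℝ) < 5)]
  gcongr
  exact hm₀ x

theorem abs_deriv_five_mul_pow_four_le (hf : IsSchwartz f) (hm₀ : ∀ x, |f x| ≤ m)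
    (hm₁ : ∀ x, |deriv f x| ≤ m) (x : ℝ) : |deriv (fun y => 5 * f y ^ 4) x| ≤ 20 * m ^ 4 := by
  have hm : 0 ≤ m := (abs_nonneg _).trans (hm₀ 0)
  have hderiv : deriv (fun y => 5 * f y ^ 4) x = 20 * (f x ^ 3 * deriv f x) := by
    simp (disch := fun_prop)
    ring
  rw [hderiv, abs_mul, abs_mul, abs_pow, abs_of_pos (by norm_num : (0 : ℝ) < 20), pow_succ m 3]
  gcongr
  exacts [hm₀ x, hm₁ x]

theorem sqNorm_iteratedDeriv_two_five_mul_pow_four_le (hf : IsSchwartz f)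
    (hm₀ : ∀ x, |f x| ≤ m) (hm₁ : ∀ x, |deriv f x| ≤ m) :
    sqNorm ∂[2] (fun x => 5 * f x ^ 4) ≤ 7200 * m ^ 6 * sobolevSq f := by
  have : 0 ≤ m := (abs_nonneg _).trans (hm₀ 0)
  have hderiv : ∂[2] (fun x => 5 * f x ^ 4) =
      fun x => 60 * f x ^ 2 * deriv f x * deriv f x + 20 * f x ^ 3 * ∂[2] f x := by
    ext x
    rw [← deriv_deriv]
    have hfirst : deriv (fun x => 5 * f x ^ 4) = fun x => 20 * (f x ^ 3 * deriv f x) := by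
      ext y
      simp (disch := fun_prop)
      ring
    rw [hfirst]
    simp (disch := fun_prop) [deriv_deriv]
    ring
  have hcoeff₁ (x : ℝ) : |60 * f x ^ 2 * deriv f x| ≤ 60 * m ^ 3 := by
    rw [abs_mul, abs_mul, abs_pow, abs_of_pos (by norm_num : (0 : ℝ) < 60), pow_succ m 2,
      ← mul_assoc]
    gcongr
    exacts [hm₀ x, hm₁ x]
  have hcoeff₂ (x : ℝ) : |20 * f x ^ 3| ≤ 60 * m ^ 3 := by
    rw [abs_mul, abs_pow, abs_of_pos (by norm_num : (0 : ℝ) < 20)]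
    gcongr
    exacts [by norm_num, hm₀ x]
  have hterm₁ := hf.deriv.sqNorm_mul_le (by fun_prop (disch := norm_num)) hcoeff₁
  have hterm₂ := (hf.iteratedDeriv 2).sqNorm_mul_le (by fun_prop (disch := norm_num)) hcoeff₂
  have hsum : sqNorm (deriv f) + sqNorm ∂[2] f ≤ sobolevSq f := by
    rw [sobolevSq]
    linarith [sqNorm_nonneg f]
  rw [hderiv]
  calc _ ≤ _ := sqNorm_add_le (by fun_prop (disch := norm_num)) (by fun_prop (disch := norm_num))
    _ ≤ 7200 * m ^ 6 * (sqNorm (deriv f) + sqNorm ∂[2] f) := by linarith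
    _ ≤ 7200 * m ^ 6 * sobolevSq f := by gcongr

theorem abs_integral_secondDiffQuot_mul_deriv_pow_five_le {h : ℝ} (hf : IsSchwartz f)
    (hm₀ : ∀ x, |f x| ≤ m) (hm₁ : ∀ x, |deriv f x| ≤ m) (hh : h ≠ 0) :
    |∫ x, secondDiffQuot h f x * secondDiffQuot h (deriv fun y => f y ^ 5) x| ≤
      (50 * m ^ 4 + m / 2 * (1 + 7200 * m ^ 6)) * sobolevSq f := by
  have hm : 0 ≤ m := (abs_nonneg _).trans (hm₀ 0)
  have hf₂ := sqNorm_iteratedDeriv_two_le_sobolevSq f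
  have ha₂ := hf.sqNorm_iteratedDeriv_two_five_mul_pow_four_le hm₀ hm₁
  rw [hf.deriv_pow_five]
  calc _ ≤ 5 / 2 * (20 * m ^ 4) * sqNorm ∂[2] f +
          m * ((sqNorm ∂[2] f + sqNorm ∂[2] fun x => 5 * f x ^ 4) / 2) :=
        hf.abs_integral_secondDiffQuot_mul_deriv_le (by fun_prop (disch := norm_num))
          (hf.abs_deriv_five_mul_pow_four_le hm₀ hm₁) hm₁ hh
    _ ≤ 5 / 2 * (20 * m ^ 4) * sobolevSq f +
          m * ((sobolevSq f + 7200 * m ^ 6 * sobolevSq f) / 2) := by gcongr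
    _ = (50 * m ^ 4 + m / 2 * (1 + 7200 * m ^ 6)) * sobolevSq f := by ring

end Quintic

theorem integral_pow_five_mul_iteratedDeriv_five (hf : IsSchwartz f) :
    ∫ x, f x ^ 5 * ∂[5] f x = -∫ x, ∂[2] f x * ∂[2] (deriv fun y => f y ^ 5) x := by
  have h := (hf.pow (n := 5) (by norm_num)).integral_mul_iteratedDeriv (hf.iteratedDeriv 2) 3
  rw [iteratedDeriv_iteratedDeriv] at h
  rw [h, ← iteratedDeriv_succ']
  simp only [mul_comm (∂[2] f _)]
  norm_num

theorem integral_regularizedEnergy_density_deriv (hf : IsSchwartz f) (h β : ℝ) :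
    ∫ x, (1 / 5 * (secondDiffQuot h f x * ∂[5] (secondDiffQuot h f) x) +
      β * (secondDiffQuot h f x * secondDiffQuot h (deriv fun y => f y ^ 5) x +
        f x ^ 5 * ∂[5] f x) +
      5 * β ^ 2 * (f x ^ 5 * deriv (fun y => f y ^ 5) x)) = β * energyFlux h f := by
  have hpow : IsSchwartz fun x => f x ^ 5 := hf.pow (by norm_num)
  have hexact := hpow.integral_mul_iteratedDeriv_eq_zero odd_one
  rw [iteratedDeriv_one] at hexact
  rw [integral_add (IsSchwartz.integrable (by fun_prop (disch := norm_num)))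
    (IsSchwartz.integrable (by fun_prop (disch := norm_num))),
    integral_add (IsSchwartz.integrable (by fun_prop (disch := norm_num)))
    (IsSchwartz.integrable (by fun_prop (disch := norm_num))), integral_const_mul,
    integral_const_mul, integral_const_mul, hexact,
    (hf.secondDiffQuot h).integral_mul_iteratedDeriv_eq_zero (by decide), energyFlux]
  ring

theorem energyFlux_eq (hf : IsSchwartz f) (h : ℝ) : energyFlux h f =
    (∫ x, secondDiffQuot h f x * secondDiffQuot h (deriv fun y => f y ^ 5) x) -
      ∫ x, ∂[2] f x * ∂[2] (deriv fun y => f y ^ 5) x := by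
  rw [energyFlux, integral_add (IsSchwartz.integrable (by fun_prop (disch := norm_num)))
    (IsSchwartz.integrable (by fun_prop (disch := norm_num))),
    hf.integral_pow_five_mul_iteratedDeriv_five, sub_eq_add_neg]

theorem tendsto_energyFlux (hf : IsSchwartz f) :
    Tendsto (fun h => energyFlux h f) (𝓝[>] 0) (𝓝 0) := by
  simp only [hf.energyFlux_eq]
  exact tendsto_sub_nhds_zero_iff.2
    (hf.tendsto_integral_secondDiffQuot_mul (hf.pow (by norm_num)).deriv)

theorem abs_energyFlux_le {m h : ℝ} (hf : IsSchwartz f) (hm₀ : ∀ x, |f x| ≤ m)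
    (hm₁ : ∀ x, |deriv f x| ≤ m) (hh : 0 < h) :
    |energyFlux h f| ≤ 2 * ((50 * m ^ 4 + m / 2 * (1 + 7200 * m ^ 6)) * sobolevSq f) := by
  have hbound {h : ℝ} (hh : 0 < h) :=
    hf.abs_integral_secondDiffQuot_mul_deriv_pow_five_le hm₀ hm₁ hh.ne'
  have hlim := (hf.tendsto_integral_secondDiffQuot_mul (hf.pow (n := 5) (by norm_num)).deriv).abs
  have hlimit := le_of_tendsto hlim (eventually_mem_nhdsWithin.mono fun h hh => hbound hh)
  rw [hf.energyFlux_eq, two_mul]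
  exact (abs_sub _ _).trans (add_le_add (hbound hh) hlimit)

end IsSchwartz

/-! ### Baire category and a priori bounds -/

section LocalBoundedness

variable {X α : Type*} [TopologicalSpace X] {N : X → α} {S : Set X}

theorem bddAbove_image_of_isBoundedUnder [Preorder α] [IsDirectedOrder α] [Nonempty α]
    (hS : IsCompact S) (hN : ∀ t ∈ S, IsBoundedUnder (· ≤ ·) (𝓝[S] t) N) :
    BddAbove (N '' S) := by
  refine hS.induction_on (p := fun T => BddAbove (N '' T)) (by simp)
    (fun T T' hT hT' => hT'.mono (image_mono hT)) (fun T T' hT hT' => ?_) fun t ht => ?_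
  · rw [image_union]
    exact hT.union hT'
  · obtain ⟨K, hK⟩ := hN t ht
    exact ⟨{r | N r ≤ K}, hK, K, forall_mem_image.2 fun r hr => hr⟩

theorem isClosed_setOf_not_isBoundedUnder [LE α] (hS : IsClosed S) :
    IsClosed {t ∈ S | ¬ IsBoundedUnder (· ≤ ·) (𝓝[S] t) N} := by
  refine isClosed_of_closure_subset fun t ht =>
    ⟨closure_minimal (sep_subset _ _) hS ht, fun ⟨K, hK⟩ => ?_⟩
  rw [eventually_map] at hK
  obtain ⟨r, hr, hKr⟩ := ((mem_closure_iff_frequently.1 ht).and_eventually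
    (eventually_nhdsWithin_iff.1 (eventually_eventually_nhdsWithin.2 hK))).exists
  exact hr.2 ⟨K, hKr hr.1⟩

theorem exists_isBoundedUnder_of_lowerSemicontinuousOn [BaireSpace S] {N : X → ℝ}
    (hne : S.Nonempty) (hN : LowerSemicontinuousOn N S) :
    ∃ t ∈ S, IsBoundedUnder (· ≤ ·) (𝓝[S] t) N := by
  have := hne.to_subtype
  obtain ⟨n, t, ht⟩ := nonempty_interior_of_iUnion_of_closed (f := fun n : ℕ => {t : S | N t ≤ n})
    (fun n => (lowerSemicontinuous_restrict_iff.2 hN).isClosed_preimage n)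
    (iUnion_eq_univ_iff.2 fun t => exists_nat_ge (N t))
  refine ⟨t, t.2, n, ?_⟩
  rw [eventually_map, ← map_nhds_subtype_val]
  exact mem_interior_iff_mem_nhds.1 ht

end LocalBoundedness

section Propagation

variable {I : Set ℝ} {N : ℝ → ℝ} {Φ : ℝ → ℝ} {s d : ℝ}

theorem le_of_isBoundedUnder_of_ne (hI : I.OrdConnected) (hs : s ∈ I) (hd : d ∈ I)
    (hΦ : ∀ r ∈ I, ∀ t ∈ I, BddAbove (N '' uIcc r t) → ∀ K, N r ≤ K → N t ≤ Φ K)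
    (hN : ∀ r ∈ uIcc d s, r ≠ d → IsBoundedUnder (· ≤ ·) (𝓝[I] r) N) {K : ℝ} (hK : N d ≤ K) :
    N s ≤ Φ K := by
  have hsub : uIcc d s ⊆ I := hI.uIcc_subset hd hs
  refine hΦ d hd s hs ⟨max (N d) (Φ (N s)), forall_mem_image.2 fun r hr => ?_⟩ K hK
  rcases eq_or_ne r d with rfl | hrd
  · exact le_max_left _ _
  refine (hΦ s hs r (hsub hr) (bddAbove_image_of_isBoundedUnder isCompact_uIcc fun q hq => ?_)
    _ le_rfl).trans (le_max_right _ _)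
  have hq' : q ∈ uIcc d s := by
    rw [uIcc_comm]
    exact uIcc_subset_uIcc_left (by rwa [uIcc_comm]) hq
  have hqd : q ≠ d := by
    rintro rfl
    exact hrd (eq_of_mem_uIcc_of_mem_uIcc hr (by rwa [uIcc_comm]))
  exact (hN q hq' hqd).mono (nhdsWithin_mono q (hI.uIcc_subset hs (hsub hr)))

theorem bddAbove_image_of_lowerSemicontinuousOn (hI : I.OrdConnected) (hcompact : IsCompact I)
    (hN : LowerSemicontinuousOn N I)
    (hΦ : ∀ r ∈ I, ∀ t ∈ I, BddAbove (N '' uIcc r t) → ∀ K, N r ≤ K → N t ≤ Φ K) :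
    BddAbove (N '' I) := by
  set F := {t ∈ I | ¬ IsBoundedUnder (· ≤ ·) (𝓝[I] t) N}
  have hF : IsClosed F := isClosed_setOf_not_isBoundedUnder hcompact.isClosed
  suffices hempty : F = ∅ from bddAbove_image_of_isBoundedUnder hcompact fun t ht =>
    not_not.1 fun h => eq_empty_iff_forall_notMem.1 hempty t ⟨ht, h⟩
  by_contra hne
  have := hF.completeSpace_coe
  obtain ⟨t₀, ht₀, K, hK⟩ := exists_isBoundedUnder_of_lowerSemicontinuousOn
    (nonempty_iff_ne_empty.2 hne) (hN.mono (sep_subset _ _))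
  obtain ⟨ε, hε, hball⟩ := Metric.mem_nhdsWithin_iff.1 (eventually_map.1 hK)
  refine ht₀.2 ⟨Φ K, eventually_map.2 (eventually_nhdsWithin_iff.2 ?_)⟩
  filter_upwards [Metric.ball_mem_nhds t₀ hε] with s hsball hs
  obtain ⟨d, ⟨hd, hdF⟩, hmin⟩ := ((isCompact_uIcc (a := s) (b := t₀)).inter_right hF).exists_isMinOn
    ⟨t₀, right_mem_uIcc, ht₀⟩ (f := dist s) (by fun_prop)
  have hdball : d ∈ Metric.ball t₀ ε :=
    (convex_ball t₀ ε).ordConnected.uIcc_subset hsball (Metric.mem_ball_self hε) hd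
  refine le_of_isBoundedUnder_of_ne hI hs hdF.1 hΦ (fun r hr hrd => ?_) (hball ⟨hdball, hdF⟩)
  by_contra hbad
  have hr' : r ∈ uIcc s d := by rwa [uIcc_comm]
  have hle : dist s d ≤ dist s r := hmin ⟨uIcc_subset_uIcc_left hd hr',
    hI.uIcc_subset hs hdF.1 hr', hbad⟩
  have hsplit : dist s r + dist r d = dist s d :=
    dist_add_dist_of_mem_segment (by rwa [segment_eq_uIcc])
  exact hrd (dist_le_zero.1 (by linarith))

end Propagation

theorem lowerSemicontinuousOn_integral_of_nonneg {X : Type*} [TopologicalSpace X] {S : Set X}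
    {f : X → ℝ → ℝ} (hf : Continuous (Function.uncurry f)) (hnonneg : ∀ t x, 0 ≤ f t x)
    (hint : ∀ t ∈ S, Integrable (f t)) : LowerSemicontinuousOn (fun t => ∫ x, f t x) S := by
  intro t ht y hy
  have hexhaust : Tendsto (fun n : ℕ => ∫ x in (-(n : ℝ))..n, f t x) atTop (𝓝 (∫ x, f t x)) :=
    intervalIntegral_tendsto_integral (hint t ht)
      (tendsto_neg_atTop_atBot.comp tendsto_natCast_atTop_atTop) tendsto_natCast_atTop_atTop
  obtain ⟨n, hn⟩ := (hexhaust.eventually_const_lt hy).exists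
  have hcont : Continuous fun r => ∫ x in (-(n : ℝ))..n, f r x :=
    intervalIntegral.continuous_parametric_intervalIntegral_of_continuous' hf _ _
  filter_upwards [self_mem_nhdsWithin, mem_nhdsWithin_of_mem_nhds
    (hcont.continuousAt.eventually_const_lt hn)] with r hr hlt
  refine hlt.trans_le ?_
  rw [intervalIntegral.integral_of_le (neg_le_self n.cast_nonneg)]
  exact setIntegral_le_integral (hint r hr) (Eventually.of_forall (hnonneg r))

/-! ### Solutions -/

section JointRegularity

open Function

variable {f : ℝ → ℝ → ℝ}

theorem contDiff_uncurry_deriv (hf : ContDiff ℝ ∞ (uncurry f)) :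
    ContDiff ℝ ∞ (uncurry fun t => deriv (f t)) := by
  have hderiv : (uncurry fun t => deriv (f t)) = fun p => fderiv ℝ (uncurry f) p (0, 1) := by
    ext ⟨t, x⟩
    have hline : HasDerivAt (fun y : ℝ => (t, y)) (0, 1) x :=
      (hasDerivAt_const x t).prodMk (hasDerivAt_id x)
    exact ((hf.differentiable (by simp) (t, x)).hasFDerivAt.comp_hasDerivAt x hline).deriv
  rw [hderiv]
  exact (hf.fderiv_right (by simp)).clm_apply contDiff_const

theorem contDiff_uncurry_iteratedDeriv (hf : ContDiff ℝ ∞ (uncurry f)) (k : ℕ) :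
    ContDiff ℝ ∞ (uncurry fun t => ∂[k] (f t)) := by
  induction k with
  | zero => simpa only [iteratedDeriv_zero] using hf
  | succ k ih => simpa only [iteratedDeriv_succ] using contDiff_uncurry_deriv ih

theorem contDiff_uncurry_diffQuot (hf : ContDiff ℝ ∞ (uncurry f)) (h : ℝ) :
    ContDiff ℝ ∞ (uncurry fun t => diffQuot h (f t)) :=
  ((hf.comp (contDiff_fst.prodMk (contDiff_snd.add contDiff_const))).sub hf).div_const h

theorem contDiff_uncurry_secondDiffQuot (hf : ContDiff ℝ ∞ (uncurry f)) (h : ℝ) :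
    ContDiff ℝ ∞ (uncurry fun t => secondDiffQuot h (f t)) :=
  contDiff_uncurry_diffQuot (contDiff_uncurry_diffQuot hf h) h

theorem hasDerivAt_secondDiffQuot {f' : ℝ → ℝ} {t : ℝ}
    (hf : ∀ x, HasDerivAt (fun s => f s x) (f' x) t) (h x : ℝ) :
    HasDerivAt (fun s => secondDiffQuot h (f s) x) (secondDiffQuot h f' x) t :=
  ((((hf _).sub (hf _)).div_const h).sub (((hf _).sub (hf _)).div_const h)).div_const h

end JointRegularity

/-- A smooth solution of `∂ₜu = (1/5)∂ₓ⁵u + β∂ₓ(u⁵)` over the set `I` of times, each of whose states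
`u t` is a Schwartz function; the decay need not be uniform in `t`. -/
structure IsQuinticSolution (β : ℝ) (I : Set ℝ) (u : ℝ → ℝ → ℝ) : Prop where
  contDiff : ContDiff ℝ ∞ (Function.uncurry u)
  isSchwartz : ∀ t ∈ I, IsSchwartz (u t)
  hasDerivAt : ∀ t ∈ I, ∀ x,
    HasDerivAt (fun s => u s x) (1 / 5 * ∂[5] (u t) x + β * deriv (fun y => u t y ^ 5) x) t

namespace IsQuinticSolution

variable {β K s t : ℝ} {I : Set ℝ} {u : ℝ → ℝ → ℝ}

theorem mono {J : Set ℝ} (hu : IsQuinticSolution β I u) (hJ : J ⊆ I) : IsQuinticSolution β J u :=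
  ⟨hu.contDiff, fun t ht => hu.isSchwartz t (hJ ht), fun t ht => hu.hasDerivAt t (hJ ht)⟩

theorem contDiff_deriv_pow_five (hu : IsQuinticSolution β I u) :
    ContDiff ℝ ∞ (Function.uncurry fun t => deriv fun y => u t y ^ 5) :=
  contDiff_uncurry_deriv (f := fun t y => u t y ^ 5) (hu.contDiff.pow 5)

section SobolevBound

theorem abs_le_sqrt (hu : IsQuinticSolution β I u) (hK : ∀ t ∈ I, sobolevSq (u t) ≤ K)
    (ht : t ∈ I) (x : ℝ) : |u t x| ≤ √K :=
  ((hu.isSchwartz t ht).abs_le_sqrt_sobolevSq x).trans (Real.sqrt_le_sqrt (hK t ht))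

theorem abs_deriv_le_sqrt (hu : IsQuinticSolution β I u) (hK : ∀ t ∈ I, sobolevSq (u t) ≤ K)
    (ht : t ∈ I) (x : ℝ) : |deriv (u t) x| ≤ √K :=
  ((hu.isSchwartz t ht).abs_deriv_le_sqrt_sobolevSq x).trans (Real.sqrt_le_sqrt (hK t ht))

theorem exists_sqNorm_pow_five_le (hu : IsQuinticSolution β I u)
    (hK : ∀ t ∈ I, sobolevSq (u t) ≤ K) : ∃ M, ∀ t ∈ I, sqNorm (fun x => u t x ^ 5) ≤ M := by
  refine ⟨(√K ^ 4) ^ 2 * K, fun t ht =>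
    ((hu.isSchwartz t ht).sqNorm_pow_five_le (hu.abs_le_sqrt hK ht)).trans ?_⟩
  gcongr
  exact (sqNorm_le_sobolevSq _).trans (hK t ht)

theorem exists_sqNorm_deriv_pow_five_le (hu : IsQuinticSolution β I u)
    (hK : ∀ t ∈ I, sobolevSq (u t) ≤ K) :
    ∃ M, ∀ t ∈ I, sqNorm (deriv fun x => u t x ^ 5) ≤ M := by
  refine ⟨(5 * √K ^ 4) ^ 2 * K, fun t ht =>
    ((hu.isSchwartz t ht).sqNorm_deriv_pow_five_le (hu.abs_le_sqrt hK ht)).trans ?_⟩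
  gcongr
  exact (sqNorm_deriv_le_sobolevSq _).trans (hK t ht)

theorem exists_sqNorm_secondDiffQuot_deriv_pow_five_le (hu : IsQuinticSolution β I u)
    (hK : ∀ t ∈ I, sobolevSq (u t) ≤ K) (h : ℝ) :
    ∃ M, ∀ t ∈ I, sqNorm (secondDiffQuot h (deriv fun x => u t x ^ 5)) ≤ M := by
  obtain ⟨M, hM⟩ := hu.exists_sqNorm_deriv_pow_five_le hK
  refine ⟨(4 / h ^ 2) ^ 2 * M, fun t ht =>
    ((hu.isSchwartz t ht).pow (n := 5) (by norm_num)).deriv.sqNorm_secondDiffQuot_le_mul h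
      |>.trans ?_⟩
  gcongr
  exact hM t ht

theorem exists_sobolevSq_secondDiffQuot_le (hu : IsQuinticSolution β I u)
    (hK : ∀ t ∈ I, sobolevSq (u t) ≤ K) (h : ℝ) :
    ∃ M, ∀ t ∈ I, sobolevSq (secondDiffQuot h (u t)) ≤ M := by
  refine ⟨(4 / h ^ 2) ^ 2 * K, fun t ht =>
    ((hu.isSchwartz t ht).sobolevSq_secondDiffQuot_le h).trans ?_⟩
  gcongr
  exact hK t ht

theorem cutoffControlled_pow_five_mul_deriv (hu : IsQuinticSolution β I u)
    (hK : ∀ t ∈ I, sobolevSq (u t) ≤ K) :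
    CutoffControlled I fun t x => u t x ^ 5 * deriv (fun y => u t y ^ 5) x :=
  .of_sqNorm_le (f := fun t x => u t x ^ 5) (g := fun t => deriv fun y => u t y ^ 5)
    (hu.contDiff.continuous.pow 5) hu.contDiff_deriv_pow_five.continuous
    (fun t ht => (hu.isSchwartz t ht).pow (by norm_num))
    (fun t ht => ((hu.isSchwartz t ht).pow (by norm_num)).deriv)
    (hu.exists_sqNorm_pow_five_le hK) (hu.exists_sqNorm_deriv_pow_five_le hK)

theorem cutoffControlled_energyFlux (hu : IsQuinticSolution β I u)
    (hK : ∀ t ∈ I, sobolevSq (u t) ≤ K) (h : ℝ) :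
    CutoffControlled I fun t x =>
      secondDiffQuot h (u t) x * secondDiffQuot h (deriv fun y => u t y ^ 5) x +
        u t x ^ 5 * ∂[5] (u t) x := by
  refine .add ?_ (.of_pow_five_mul_iteratedDeriv_five hu.contDiff.continuous
    (contDiff_uncurry_iteratedDeriv hu.contDiff 5).continuous hu.isSchwartz ⟨K, hK⟩)
  obtain ⟨M, hM⟩ := hu.exists_sobolevSq_secondDiffQuot_le hK h
  exact .of_sqNorm_le (contDiff_uncurry_secondDiffQuot hu.contDiff h).continuous
    (contDiff_uncurry_secondDiffQuot hu.contDiff_deriv_pow_five h).continuous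
    (fun t ht => (hu.isSchwartz t ht).secondDiffQuot h)
    (fun t ht => ((hu.isSchwartz t ht).pow (by norm_num)).deriv.secondDiffQuot h)
    ⟨M, fun t ht => (sqNorm_le_sobolevSq _).trans (hM t ht)⟩
    (hu.exists_sqNorm_secondDiffQuot_deriv_pow_five_le hK h)

theorem cutoffControlled_secondDiffQuot_mul (hu : IsQuinticSolution β I u)
    (hK : ∀ t ∈ I, sobolevSq (u t) ≤ K) (h : ℝ) :
    CutoffControlled I fun t x => secondDiffQuot h (u t) x * ∂[5] (secondDiffQuot h (u t)) x :=
  have hcont := contDiff_uncurry_secondDiffQuot hu.contDiff h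
  .of_mul_iteratedDeriv_five hcont.continuous (contDiff_uncurry_iteratedDeriv hcont 5).continuous
    (fun t ht => (hu.isSchwartz t ht).secondDiffQuot h) (hu.exists_sobolevSq_secondDiffQuot_le hK h)

end SobolevBound

theorem sqNorm_eq (hu : IsQuinticSolution β (uIcc s t) u)
    (hK : ∀ r ∈ uIcc s t, sobolevSq (u r) ≤ K) : sqNorm (u t) = sqNorm (u s) := by
  have hmass : CutoffControlled (uIcc s t) fun r x =>
      2 / 5 * (u r x * ∂[5] (u r) x) + 2 * β * (u r x * deriv (fun y => u r y ^ 5) x) :=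
    .add (.const_mul _ (.of_mul_iteratedDeriv_five hu.contDiff.continuous
      (contDiff_uncurry_iteratedDeriv hu.contDiff 5).continuous hu.isSchwartz ⟨K, hK⟩))
      (.const_mul _ (.of_sqNorm_le hu.contDiff.continuous hu.contDiff_deriv_pow_five.continuous
        hu.isSchwartz (fun r hr => ((hu.isSchwartz r hr).pow (by norm_num)).deriv)
        ⟨K, fun r hr => (sqNorm_le_sobolevSq _).trans (hK r hr)⟩
        (hu.exists_sqNorm_deriv_pow_five_le hK)))
  have hflux {r : ℝ} (hr : r ∈ uIcc s t) : ∫ x, (2 / 5 * (u r x * ∂[5] (u r) x) +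
      2 * β * (u r x * deriv (fun y => u r y ^ 5) x)) = 0 := by
    have hr' := hu.isSchwartz r hr
    have hnonlinear : ∫ x, u r x * deriv (fun y => u r y ^ 5) x = 0 := by
      rw [hr'.deriv_pow_five, ← mul_zero 5, ← hr'.integral_pow_mul_deriv_eq_zero (n := 5),
        ← integral_const_mul]
      congr 1 with x
      ring
    rw [integral_add (IsSchwartz.integrable (by fun_prop (disch := norm_num)))
      (IsSchwartz.integrable (by fun_prop (disch := norm_num))), integral_const_mul,
      integral_const_mul, hr'.integral_mul_iteratedDeriv_eq_zero (by decide), hnonlinear]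
    ring
  have hderiv (r : ℝ) (hr : r ∈ uIcc s t) (x : ℝ) := (hu.hasDerivAt r hr x).pow 2
  have hdiff := hmass.integral_sub_integral (F := fun r x => u r x ^ 2)
    (fun r hr => (hu.isSchwartz r hr).pow (by norm_num))
    fun r hr x => (hderiv r hr x).congr_deriv (by ring)
  rw [intervalIntegral.integral_congr fun r hr => hflux hr, intervalIntegral.integral_zero] at hdiff
  exact sub_eq_zero.1 hdiff

theorem hasDerivAt_regularizedEnergy_density (hu : IsQuinticSolution β I u) (ht : t ∈ I)
    (h x : ℝ) :
    HasDerivAt (fun s => 1 / 2 * secondDiffQuot h (u s) x ^ 2 + 5 / 6 * β * u s x ^ 6)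
      (1 / 5 * (secondDiffQuot h (u t) x * ∂[5] (secondDiffQuot h (u t)) x) +
        β * (secondDiffQuot h (u t) x * secondDiffQuot h (deriv fun y => u t y ^ 5) x +
          u t x ^ 5 * ∂[5] (u t) x) +
        5 * β ^ 2 * (u t x ^ 5 * deriv (fun y => u t y ^ 5) x)) t := by
  have hv := hasDerivAt_secondDiffQuot (hu.hasDerivAt t ht) h x
  have hlinear : secondDiffQuot h
      (fun y => 1 / 5 * ∂[5] (u t) y + β * deriv (fun z => u t z ^ 5) y) x =
      1 / 5 * secondDiffQuot h ∂[5] (u t) x +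
        β * secondDiffQuot h (deriv fun z => u t z ^ 5) x := by
    simp only [secondDiffQuot, diffQuot]
    ring
  rw [(hu.isSchwartz t ht).iteratedDeriv_secondDiffQuot]
  refine (((hv.pow 2).const_mul (1 / 2)).add
    (((hu.hasDerivAt t ht x).pow 6).const_mul (5 / 6 * β))).congr_deriv ?_
  rw [hlinear]
  ring

theorem regularizedEnergy_sub (hu : IsQuinticSolution β (uIcc s t) u)
    (hK : ∀ r ∈ uIcc s t, sobolevSq (u r) ≤ K) (h : ℝ) :
    regularizedEnergy h β (u t) - regularizedEnergy h β (u s) =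
      ∫ r in s..t, β * energyFlux h (u r) := by
  rw [← intervalIntegral.integral_congr fun r hr =>
    (hu.isSchwartz r hr).integral_regularizedEnergy_density_deriv h β]
  refine CutoffControlled.integral_sub_integral
    (F := fun r x => 1 / 2 * secondDiffQuot h (u r) x ^ 2 + 5 / 6 * β * u r x ^ 6)
    (((hu.cutoffControlled_secondDiffQuot_mul hK h).const_mul _).add
      ((hu.cutoffControlled_energyFlux hK h).const_mul β) |>.add
      ((hu.cutoffControlled_pow_five_mul_deriv hK).const_mul _)) (fun r hr => ?_)
    fun r hr => hu.hasDerivAt_regularizedEnergy_density hr h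
  have hr' := hu.isSchwartz r hr
  fun_prop (disch := norm_num)

theorem stronglyMeasurable_energyFlux (hu : IsQuinticSolution β I u) (h : ℝ) :
    StronglyMeasurable fun t => energyFlux h (u t) :=
  .integral_prod_right (Continuous.stronglyMeasurable
    (((contDiff_uncurry_secondDiffQuot hu.contDiff h).continuous.mul
      (contDiff_uncurry_secondDiffQuot hu.contDiff_deriv_pow_five h).continuous).add
      ((hu.contDiff.continuous.pow 5).mul
        (contDiff_uncurry_iteratedDeriv hu.contDiff 5).continuous)))

theorem exists_abs_energyFlux_le (hu : IsQuinticSolution β I u)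
    (hK : ∀ t ∈ I, sobolevSq (u t) ≤ K) : ∃ C, ∀ h > 0, ∀ t ∈ I, |energyFlux h (u t)| ≤ C := by
  refine ⟨2 * ((50 * √K ^ 4 + √K / 2 * (1 + 7200 * √K ^ 6)) * K), fun h hh t ht =>
    ((hu.isSchwartz t ht).abs_energyFlux_le (hu.abs_le_sqrt hK ht)
      (hu.abs_deriv_le_sqrt hK ht) hh).trans ?_⟩
  gcongr
  exact hK t ht

theorem tendsto_integral_energyFlux (hu : IsQuinticSolution β (uIcc s t) u)
    (hK : ∀ r ∈ uIcc s t, sobolevSq (u r) ≤ K) :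
    Tendsto (fun h => ∫ r in s..t, energyFlux h (u r)) (𝓝[>] 0) (𝓝 0) := by
  obtain ⟨C, hC⟩ := hu.exists_abs_energyFlux_le hK
  suffices hlim : Tendsto (fun h => ∫ r in s..t, energyFlux h (u r)) (𝓝[>] 0)
      (𝓝 (∫ _ in s..t, (0 : ℝ))) by
    rwa [intervalIntegral.integral_zero] at hlim
  refine intervalIntegral.tendsto_integral_filter_of_dominated_convergence (fun _ => C)
    (Eventually.of_forall fun h => (hu.stronglyMeasurable_energyFlux h).aestronglyMeasurable) ?_
    intervalIntegrable_const (Eventually.of_forall fun r hr =>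
      (hu.isSchwartz r (uIoc_subset_uIcc hr)).tendsto_energyFlux)
  filter_upwards [self_mem_nhdsWithin] with h hh
  exact Eventually.of_forall fun r hr => hC h hh r (uIoc_subset_uIcc hr)

theorem energy_eq (hu : IsQuinticSolution β (uIcc s t) u)
    (hK : ∀ r ∈ uIcc s t, sobolevSq (u r) ≤ K) : energy β (u t) = energy β (u s) := by
  have hflux := (hu.tendsto_integral_energyFlux hK).const_mul β
  have hdiff := ((hu.isSchwartz t right_mem_uIcc).tendsto_regularizedEnergy β).sub
    ((hu.isSchwartz s left_mem_uIcc).tendsto_regularizedEnergy β)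
  simp only [hu.regularizedEnergy_sub hK, intervalIntegral.integral_const_mul] at hdiff
  rw [mul_zero] at hflux
  exact sub_eq_zero.1 (tendsto_nhds_unique hdiff hflux)

theorem lowerSemicontinuousOn_sobolevSq (hu : IsQuinticSolution β I u) :
    LowerSemicontinuousOn (fun t => sobolevSq (u t)) I := by
  have hterm (k : ℕ) : LowerSemicontinuousOn (fun t => sqNorm ∂[k] (u t)) I :=
    lowerSemicontinuousOn_integral_of_nonneg
      ((contDiff_uncurry_iteratedDeriv hu.contDiff k).continuous.pow 2) (fun _ _ => sq_nonneg _)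
      fun t ht => ((hu.isSchwartz t ht).iteratedDeriv k).integrable_sq
  simpa only [iteratedDeriv_zero, iteratedDeriv_one] using! ((hterm 0).add (hterm 1)).add (hterm 2)

theorem sobolevSq_le (hu : IsQuinticSolution β (uIcc s t) u)
    (hbdd : BddAbove ((fun r => sobolevSq (u r)) '' uIcc s t)) (hK : sobolevSq (u s) ≤ K) :
    sobolevSq (u t) ≤
      3 / 2 * (K + 4 * (1 / 2 * K + 10 / 3 * |β| * K ^ 3) + (20 / 3 * |β| * K ^ 2) ^ 2 * K) := by
  obtain ⟨B, hB⟩ := hbdd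
  have hB' : ∀ r ∈ uIcc s t, sobolevSq (u r) ≤ B := forall_mem_image.1 hB
  have hmass : sqNorm (u t) ≤ K := by
    rw [hu.sqNorm_eq hB']
    exact (sqNorm_le_sobolevSq _).trans hK
  have henergy : energy β (u t) ≤ 1 / 2 * K + 10 / 3 * |β| * K ^ 3 := by
    rw [hu.energy_eq hB']
    exact (hu.isSchwartz s left_mem_uIcc).energy_le β hK
  refine ((hu.isSchwartz t right_mem_uIcc).sobolevSq_le β).trans ?_
  have := sqNorm_nonneg (u t)
  gcongr

theorem exists_sobolevSq_le {a b : ℝ} (hu : IsQuinticSolution β (Icc a b) u) :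
    ∃ K, ∀ t ∈ Icc a b, sobolevSq (u t) ≤ K := by
  obtain ⟨K, hK⟩ := bddAbove_image_of_lowerSemicontinuousOn ordConnected_Icc isCompact_Icc
    hu.lowerSemicontinuousOn_sobolevSq fun r hr t ht hbdd K hK =>
      (hu.mono (ordConnected_Icc.uIcc_subset hr ht)).sobolevSq_le hbdd hK
  exact ⟨K, forall_mem_image.1 hK⟩

end IsQuinticSolution

/-- for a smooth rapidly decaying real solution of
`∂_t u - (1/5)∂_x^5 u = β ∂_x(u^5)` on a time interval, the energy
`E(t) = ∫ ((1/2)(∂_x² u)² + (5/6)β u^6) dx` is independent of `t`. -/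
theorem energy_conservation (β a b : ℝ) (u : ℝ → ℝ → ℝ)
    (hu : ContDiff ℝ (⊤ : ℕ∞) (Function.uncurry u))
    (hdecay : ∀ t ∈ Set.Icc a b, ∀ k n : ℕ, ∃ C : ℝ, ∀ x : ℝ,
      |x| ^ n * |iteratedDeriv k (fun y => u t y) x| ≤ C)
    (heq : ∀ t ∈ Set.Icc a b, ∀ x : ℝ,
      pt u t x - (1/5) * pxk 5 u t x = β * deriv (fun y => (u t y) ^ 5) x)
    (t₁ t₂ : ℝ) (h₁ : t₁ ∈ Set.Icc a b) (h₂ : t₂ ∈ Set.Icc a b) :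
    ∫ x : ℝ, ((1/2) * (pxk 2 u t₁ x) ^ 2 + (5/6) * β * (u t₁ x) ^ 6)
      = ∫ x : ℝ, ((1/2) * (pxk 2 u t₂ x) ^ 2 + (5/6) * β * (u t₂ x) ^ 6) := by
  have hsol : IsQuinticSolution β (Icc a b) u :=
    { contDiff := hu
      isSchwartz := fun t ht => .of_decay
        (hu.comp (contDiff_prodMk_right t)) (hdecay t ht)
      hasDerivAt := fun t ht x => by
        have hderiv : HasDerivAt (fun s => u s x) (pt u t x) t :=
          ((hu.comp (contDiff_prodMk_left x)).differentiable (by simp) t).hasDerivAt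
        refine hderiv.congr_deriv (eq_add_of_sub_eq' (heq t ht x)) }
  obtain ⟨K, hK⟩ := hsol.exists_sobolevSq_le
  have hsub : uIcc t₂ t₁ ⊆ Icc a b := ordConnected_Icc.uIcc_subset h₂ h₁
  exact (hsol.mono hsub).energy_eq fun r hr => hK r (hsub hr)
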